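/- arXiv:1712.06177 — 2 statements merged into one kernel-verified Lean document; each statement's English description precedes it below -/
import Mathlib

section
/- Let R be an algebra, α an automorphism of R, δ an α-derivation, and A = R[t; α, δ]. Suppose right-gldim R = n < ∞. Then for every right A-module M there is a short exact sequence of right A-modules 0 → M_α ⊗_R A → M ⊗_R A → M → 0, where the second map sends m ⊗ a to m·a, and consequently right-gldim A ≤ right-gldim R + 1. -/
universe u

/-- `pdLE R n M` : the projective dimension of the `R`-module `M` is at most `n`. -/
def pdLE (R : Type u) [Ring R] :
    ℕ → (M : Type u) → (i : AddCommGroup M) → @Module R M _ i.toAddCommMonoid → Prop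
  | 0, M, i, j => letI := i; letI := j; Module.Projective R M
  | n + 1, M, i, j => letI := i; letI := j;
      ∃ (ι : Type u) (f : (ι →₀ R) →ₗ[R] M), Function.Surjective f ∧
        pdLE R n (LinearMap.ker f) inferInstance inferInstance

/-- The projective dimension of `M` over `R`, valued in `ℕ∞`. -/
noncomputable def projDim (R : Type u) [Ring R]
    (M : Type u) (i : AddCommGroup M) (j : @Module R M _ i.toAddCommMonoid) : ℕ∞ :=
  sInf {d : ℕ∞ | ∃ n : ℕ, d = n ∧ pdLE R n M i j}

/-- The right global dimension of a ring `R`. -/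
noncomputable def rightGlobalDim (R : Type u) [Ring R] : ℕ∞ :=
  sSup {d : ℕ∞ | ∃ (M : Type u) (i : AddCommGroup M)
    (j : @Module Rᵐᵒᵖ M _ i.toAddCommMonoid), d = projDim Rᵐᵒᵖ M i j}

/-- `A` (with embedding `ι` and distinguished element `t`) is the Ore extension
`R[t; α, δ]`. -/
structure IsOreExtension (k : Type u) [Field k] (R : Type u) [Ring R] [Algebra k R]
    (α : R → R) (δ : R → R)
    (A : Type u) [Ring A] [Algebra k A] (ι : R →ₐ[k] A) (t : A) : Prop where
  rel : ∀ r : R, t * ι r = ι (α r) * t + ι (δ r)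
  repr : ∀ a : A, ∃! c : ℕ →₀ R, a = c.sum fun i r => ι r * t ^ i

/-- `T` (with biadditive `τ`) is the tensor product `M_β ⊗_R A`, where `M` is a right
`A`-module regarded as a right `R`-module via `r ↦ β r ∈ A`, and `A` is a left
`R`-module via `η`. -/
structure IsModuleTensor (R A : Type u) [Ring R] [Ring A] (η β : R → A)
    (M : Type u) [AddCommGroup M] [Module Aᵐᵒᵖ M]
    (T : Type u) [AddCommGroup T] (τ : M →+ A →+ T) : Prop where
  balanced : ∀ (m : M) (r : R) (a : A),
    τ (MulOpposite.op (β r) • m) a = τ m (η r * a)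
  universal : ∀ (C : Type u) [AddCommGroup C] (g : M →+ A →+ C),
      (∀ (m : M) (r : R) (a : A), g (MulOpposite.op (β r) • m) a = g m (η r * a)) →
      ∃! φ : T →+ C, ∀ m a, φ (τ m a) = g m a

/-!
The powers of `t` form a basis of `A` as a left `R`-module, so an element of `M ⊗_R A` or of
`M_α ⊗_R A` is a polynomial `∑ m i ⊗ t ^ i` with coefficients in `M`.  The map
`m ⊗ a ↦ m t ⊗ a - m ⊗ t a` sends `m ⊗ t ^ i` to `m t ⊗ t ^ i - m ⊗ t ^ (i + 1)`: it is injective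
because it keeps the top coefficient up to sign, and modulo its image `m ⊗ a` becomes `m a ⊗ 1`, so
that nothing else lies in the kernel of `m ⊗ a ↦ m a`.

Induction `N ↦ N ⊗_R A` along the free extension `A` is exact and preserves projectives, hence does
not increase projective dimension.  Both tensor products therefore have projective dimension at most
`right-gldim R`, and the short exact sequence bounds that of `M` by one more.
-/

universe v w

section ProjectiveDimension

open CategoryTheory

section Exact

variable {R : Type v} [Ring R] {X Y Z : Type w} [AddCommGroup X] [AddCommGroup Y]
  [AddCommGroup Z] [Module R X] [Module R Y] [Module R Z] {f : X →ₗ[R] Y} {g : Y →ₗ[R] Z}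

theorem hasProjectiveDimensionLE_zero_iff_projective [Small.{w} R] :
    HasProjectiveDimensionLE (ModuleCat.of R X) 0 ↔ Module.Projective R X := by
  rw [IsProjective.iff_projective, projective_iff_hasProjectiveDimensionLE_zero]

theorem hasProjectiveDimensionLE_succ_of_exact (hf : Function.Injective f)
    (hfg : Function.Exact f g) (hg : Function.Surjective g) (n : ℕ)
    (hX : HasProjectiveDimensionLE (ModuleCat.of R X) n)
    (hY : HasProjectiveDimensionLE (ModuleCat.of R Y) n) :
    HasProjectiveDimensionLE (ModuleCat.of R Z) (n + 1) := by
  have hS := ModuleCat.shortComplex_shortExact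
    (ModuleCat.shortComplexOfCompEqZero f g hfg.linearMap_comp_eq_zero) hfg hf hg
  exact hS.hasProjectiveDimensionLT_X₃ (n + 1) hX
    (hasProjectiveDimensionLT_of_ge (ModuleCat.of R Y) (n + 1) (n + 2) (n + 1).le_succ)

theorem hasProjectiveDimensionLE_succ_iff_of_exact [Module.Projective R Y]
    (hf : Function.Injective f) (hfg : Function.Exact f g) (hg : Function.Surjective g) (n : ℕ) :
    HasProjectiveDimensionLE (ModuleCat.of R Z) (n + 1) ↔
      HasProjectiveDimensionLE (ModuleCat.of R X) n := by
  have hS := ModuleCat.shortComplex_shortExact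
    (ModuleCat.shortComplexOfCompEqZero f g hfg.linearMap_comp_eq_zero) hfg hf hg
  exact hS.hasProjectiveDimensionLT_X₃_iff n
    (ModuleCat.projective_of_categoryTheory_projective (ModuleCat.of R Y))

theorem hasProjectiveDimensionLE_succ_iff_ker [Module.Projective R Y]
    (hg : Function.Surjective g) (n : ℕ) :
    HasProjectiveDimensionLE (ModuleCat.of R Z) (n + 1) ↔
      HasProjectiveDimensionLE (ModuleCat.of R (LinearMap.ker g)) n :=
  hasProjectiveDimensionLE_succ_iff_of_exact (Submodule.subtype_injective _)
    (LinearMap.exact_subtype_ker_map g) hg n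

end Exact

variable {R : Type u} [Ring R]

theorem pdLE_iff_hasProjectiveDimensionLE (n : ℕ) (M : Type u) [i : AddCommGroup M]
    [j : Module R M] : pdLE R n M i j ↔ HasProjectiveDimensionLE (ModuleCat.of R M) n := by
  induction n generalizing M with
  | zero => exact hasProjectiveDimensionLE_zero_iff_projective.symm
  | succ n ih =>
    constructor
    · rintro ⟨κ, f, hf, hker⟩
      exact (hasProjectiveDimensionLE_succ_iff_ker hf n).2 ((ih _).1 hker)
    · intro h
      have hsurj := Finsupp.linearCombination_id_surjective R M
      exact ⟨M, _, hsurj, (ih _).2 ((hasProjectiveDimensionLE_succ_iff_ker hsurj n).1 h)⟩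

theorem projDim_le_iff (n : ℕ) (M : Type u) [i : AddCommGroup M] [j : Module R M] :
    projDim R M i j ≤ n ↔ HasProjectiveDimensionLE (ModuleCat.of R M) n := by
  constructor
  · intro h
    have hlt : projDim R M i j < (n + 1 : ℕ) := h.trans_lt (Nat.cast_lt.2 n.lt_succ_self)
    obtain ⟨_, ⟨m, rfl, hm⟩, hmn⟩ := sInf_lt_iff.1 hlt
    have := (pdLE_iff_hasProjectiveDimensionLE m M).1 hm
    exact hasProjectiveDimensionLT_of_ge _ (m + 1) (n + 1) (Nat.succ_le_of_lt (Nat.cast_lt.1 hmn))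
  · intro h
    exact sInf_le ⟨n, rfl, (pdLE_iff_hasProjectiveDimensionLE n M).2 h⟩

theorem rightGlobalDim_le_iff (n : ℕ) :
    rightGlobalDim R ≤ n ↔ ∀ (M : Type u) [AddCommGroup M] [Module Rᵐᵒᵖ M],
      HasProjectiveDimensionLE (ModuleCat.of Rᵐᵒᵖ M) n := by
  constructor
  · intro h M i j
    have hM : projDim Rᵐᵒᵖ M i j ≤ rightGlobalDim R := le_sSup ⟨M, i, j, rfl⟩
    exact (projDim_le_iff n M).1 (hM.trans h)
  · intro h
    refine sSup_le ?_
    rintro _ ⟨M, _, _, rfl⟩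
    exact (projDim_le_iff n M).2 (h M)

end ProjectiveDimension

open MulOpposite

section Basis

variable {I R A : Type*} [Semiring R] [AddCommMonoid A] [Module R A]

theorem addMonoidHom_ext_of_basis {C : Type*} [AddCommMonoid C] (b : Module.Basis I R A)
    {f g : A →+ C} (h : ∀ i (r : R), f (r • b i) = g (r • b i)) : f = g := by
  have hcomp : f.comp b.repr.symm.toAddEquiv.toAddMonoidHom =
      g.comp b.repr.symm.toAddEquiv.toAddMonoidHom :=
    Finsupp.addHom_ext fun i r => by simpa using h i r
  ext a
  simpa using DFunLike.congr_fun hcomp (b.repr a)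

theorem exists_basis_of_existsUnique_sum {v : I → A}
    (h : ∀ a, ∃! c : I →₀ R, a = c.sum fun i r => r • v i) :
    ∃ b : Module.Basis I R A, ∀ i, b i = v i := by
  have hbij : Function.Bijective (Finsupp.linearCombination R v) :=
    Function.bijective_iff_existsUnique _ |>.2 fun a => by
      simpa only [Finsupp.linearCombination_apply, eq_comm] using h a
  exact ⟨.ofRepr (LinearEquiv.ofBijective _ hbij).symm, fun i => by simp [Module.Basis.coe_ofRepr]⟩

end Basis

/-- The right `A`-module `N ⊗_R A` induced from a right `R`-module `N`, for a ring `A` that is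
free as a left `R`-module.  The element `∑ i, n i ⊗ b i` is encoded by its family of coefficients
`n i` with respect to the basis `b`. -/
def InducedModule {I R A : Type*} [Ring R] [Ring A] [Module R A] (_b : Module.Basis I R A)
    (N : Type*) [AddCommGroup N] : Type _ :=
  I →₀ N

namespace InducedModule

section

variable {I R A : Type*} [Ring R] [Ring A] [Module R A] {b : Module.Basis I R A}
  {N C : Type*} [AddCommGroup N] [AddCommGroup C]

noncomputable instance : AddCommGroup (InducedModule b N) :=
  inferInstanceAs (AddCommGroup (I →₀ N))

variable (b N) in
/-- The coefficients `i ↦ n i` of an element `∑ i, n i ⊗ b i` of `N ⊗_R A`. -/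
noncomputable def coeff : InducedModule b N ≃+ (I →₀ N) :=
  AddEquiv.refl _

variable [Module Rᵐᵒᵖ N]

variable (b N) in
/-- The canonical biadditive map `(n, a) ↦ n ⊗ a`. -/
noncomputable def tmul : N →+ A →+ InducedModule b N :=
  AddMonoidHom.flip <|
    ((Finsupp.liftAddHom fun i => (AddMonoidHom.compHom (Finsupp.singleAddHom i)).comp
      ((smulAddHom Rᵐᵒᵖ N).comp opAddEquiv.toAddMonoidHom)).comp
        b.repr.toLinearMap.toAddMonoidHom).compr₂ (coeff b N).symm.toAddMonoidHom

theorem tmul_smul_basis (n : N) (i : I) (r : R) :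
    tmul b N n (r • b i) = (coeff b N).symm (Finsupp.single i (op r • n)) := by
  simp [tmul]

theorem tmul_basis (n : N) (i : I) : tmul b N n (b i) = (coeff b N).symm (Finsupp.single i n) := by
  simpa using tmul_smul_basis (b := b) n i 1

theorem tmul_op_smul (n : N) (r : R) (a : A) : tmul b N (op r • n) a = tmul b N n (r • a) := by
  have h : tmul b N (op r • n) = (tmul b N n).comp (DistribSMul.toAddMonoidHom A r) :=
    addMonoidHom_ext_of_basis b fun i s => by simp [tmul_smul_basis, smul_smul]
  exact DFunLike.congr_fun h a

theorem addMonoidHom_ext {f g : InducedModule b N →+ C}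
    (h : ∀ n a, f (tmul b N n a) = g (tmul b N n a)) : f = g := by
  have hcomp : f.comp (coeff b N).symm.toAddMonoidHom = g.comp (coeff b N).symm.toAddMonoidHom :=
    Finsupp.addHom_ext fun i n => by simpa [tmul_basis] using h n (b i)
  ext x
  simpa using DFunLike.congr_fun hcomp (coeff b N x)

/-- The additive map `N ⊗_R A → C` given by a biadditive map on `N × A`. -/
noncomputable def liftAddMonoidHom (g : N →+ A →+ C) : InducedModule b N →+ C :=
  (Finsupp.liftAddHom fun i => g.flip (b i)).comp (coeff b N).toAddMonoidHom

theorem liftAddMonoidHom_tmul {g : N →+ A →+ C} (hg : ∀ n (r : R) a, g (op r • n) a = g n (r • a))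
    (n : N) (a : A) : liftAddMonoidHom g (tmul b N n a) = g n a := by
  have h : (liftAddMonoidHom g).comp (tmul b N n) = g n :=
    addMonoidHom_ext_of_basis b fun i r => by simp [tmul_smul_basis, liftAddMonoidHom, hg]
  exact DFunLike.congr_fun h a

variable (b N) in
/-- Right multiplication `n ⊗ a' ↦ n ⊗ a' a` by an element `a` of `A`. -/
noncomputable def mulRight (a : A) : InducedModule b N →+ InducedModule b N :=
  liftAddMonoidHom ((tmul b N).compl₂ (AddMonoidHom.mulRight a))

end

section Module

variable {I R A : Type*} [Ring R] [Ring A] [Module R A] [IsScalarTower R A A]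
  {b : Module.Basis I R A} {N N' X : Type*} [AddCommGroup N] [Module Rᵐᵒᵖ N]
  [AddCommGroup N'] [Module Rᵐᵒᵖ N'] [AddCommGroup X] [Module Aᵐᵒᵖ X]

theorem mulRight_tmul (n : N) (a a' : A) :
    mulRight b N a (tmul b N n a') = tmul b N n (a' * a) :=
  liftAddMonoidHom_tmul (fun n r a' => by simp [tmul_op_smul, smul_mul_assoc]) n a'

noncomputable instance : Module Aᵐᵒᵖ (InducedModule b N) where
  smul a := mulRight b N a.unop
  one_smul := DFunLike.congr_fun (g := AddMonoidHom.id _) <| addMonoidHom_ext fun n a => by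
    simp [mulRight_tmul]
  mul_smul a a' := DFunLike.congr_fun (g := (mulRight b N a.unop).comp (mulRight b N a'.unop)) <|
    addMonoidHom_ext fun n x => by simp [mulRight_tmul, mul_assoc]
  smul_zero a := map_zero (mulRight b N a.unop)
  smul_add a := map_add (mulRight b N a.unop)
  add_smul a a' := DFunLike.congr_fun (g := mulRight b N a.unop + mulRight b N a'.unop) <|
    addMonoidHom_ext fun n x => by simp [mulRight_tmul, mul_add]
  zero_smul := DFunLike.congr_fun (g := 0) <| addMonoidHom_ext fun n x => by simp [mulRight_tmul]

theorem op_smul_tmul (n : N) (a a' : A) : op a • tmul b N n a' = tmul b N n (a' * a) :=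
  mulRight_tmul n a a'

theorem linearMap_ext {f g : InducedModule b N →ₗ[Aᵐᵒᵖ] X}
    (h : ∀ n, f (tmul b N n 1) = g (tmul b N n 1)) : f = g := by
  have hadd : f.toAddMonoidHom = g.toAddMonoidHom := addMonoidHom_ext fun n a => by
    have ha : tmul b N n a = op a • tmul b N n 1 := by rw [op_smul_tmul, one_mul]
    simp [ha, h]
  exact LinearMap.toAddMonoidHom_injective hadd

/-- The `A`-linear map `N ⊗_R A → X` given by a balanced biadditive map on `N × A` which is
`A`-linear in the second variable. -/
noncomputable def lift (g : N →+ A →+ X) (hbal : ∀ n (r : R) a, g (op r • n) a = g n (r • a))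
    (hlin : ∀ n a a', g n (a' * a) = op a • g n a') : InducedModule b N →ₗ[Aᵐᵒᵖ] X where
  __ := liftAddMonoidHom g
  map_smul' c := DFunLike.congr_fun
    (f := (liftAddMonoidHom g).comp (DistribSMul.toAddMonoidHom (InducedModule b N) c))
    (g := (DistribSMul.toAddMonoidHom X c).comp (liftAddMonoidHom g)) <|
    addMonoidHom_ext fun n a => by
      obtain ⟨c, rfl⟩ := op_surjective c
      simp [op_smul_tmul, liftAddMonoidHom_tmul hbal, hlin]

theorem lift_tmul (g : N →+ A →+ X) (hbal : ∀ n (r : R) a, g (op r • n) a = g n (r • a))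
    (hlin : ∀ n a a', g n (a' * a) = op a • g n a') (n : N) (a : A) :
    lift (b := b) g hbal hlin (tmul b N n a) = g n a :=
  liftAddMonoidHom_tmul hbal n a

variable (b) in
/-- The map `f ⊗ A : N ⊗_R A → N' ⊗_R A` induced by an `R`-linear map `f : N → N'`. -/
noncomputable def map (f : N →ₗ[Rᵐᵒᵖ] N') : InducedModule b N →ₗ[Aᵐᵒᵖ] InducedModule b N' :=
  lift ((tmul b N').comp f.toAddMonoidHom) (fun n r a => by simp [tmul_op_smul])
    (fun n a a' => by simp [op_smul_tmul])

theorem map_tmul (f : N →ₗ[Rᵐᵒᵖ] N') (n : N) (a : A) :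
    map b f (tmul b N n a) = tmul b N' (f n) a :=
  lift_tmul _ _ _ n a

theorem coeff_map (f : N →ₗ[Rᵐᵒᵖ] N') (x : InducedModule b N) :
    coeff b N' (map b f x) = Finsupp.mapRange.linearMap f (coeff b N x) := by
  have h : (map b f).toAddMonoidHom.comp (coeff b N).symm.toAddMonoidHom =
      (coeff b N').symm.toAddMonoidHom.comp (Finsupp.mapRange.linearMap f).toAddMonoidHom :=
    Finsupp.addHom_ext fun i n => by simpa [tmul_basis] using map_tmul (b := b) f n (b i)
  simpa using congrArg (coeff b N') (DFunLike.congr_fun h (coeff b N x))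

theorem map_injective {f : N →ₗ[Rᵐᵒᵖ] N'} (hf : Function.Injective f) :
    Function.Injective (map b f) := fun x y hxy =>
  (coeff b N).injective <| Finsupp.mapRange_injective f (map_zero f) hf <| by
    simpa [coeff_map] using congrArg (coeff b N') hxy

theorem map_surjective {f : N →ₗ[Rᵐᵒᵖ] N'} (hf : Function.Surjective f) :
    Function.Surjective (map b f) := fun y => by
  obtain ⟨x, hx⟩ := Finsupp.mapRange_surjective (α := I) f (map_zero f) hf (coeff b N' y)
  exact ⟨(coeff b N).symm x, (coeff b N').injective (by simpa [coeff_map] using hx)⟩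

theorem exact_map_ker_subtype (f : N →ₗ[Rᵐᵒᵖ] N') :
    Function.Exact (map b (LinearMap.ker f).subtype) (map b f) := fun x => by
  have hker : Finsupp.mapRange.linearMap f (coeff b N x) = 0 ↔
      coeff b N x ∈ Set.range (Finsupp.mapRange.linearMap (α := I) (LinearMap.ker f).subtype) := by
    rw [← LinearMap.mem_ker, ← LinearMap.coe_range, SetLike.mem_coe, Finsupp.ker_mapRange,
      Finsupp.range_mapRange_linearMap _ (Submodule.ker_subtype _), Submodule.range_subtype]
  rw [← (coeff b N').map_eq_zero_iff, coeff_map, hker, Set.mem_range, Set.mem_range,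
    (coeff b (LinearMap.ker f)).surjective.exists]
  exact exists_congr fun y => by rw [← coeff_map, (coeff b N).apply_eq_iff_eq]

theorem exists_linearMap_tmul_one [Module Rᵐᵒᵖ X]
    (hX : ∀ (r : R) (x : X), op r • x = op (r • (1 : A)) • x) (h : N →ₗ[Rᵐᵒᵖ] X) :
    ∃ φ : InducedModule b N →ₗ[Aᵐᵒᵖ] X, ∀ n, φ (tmul b N n 1) = h n := by
  let g : N →+ A →+ X :=
    ((smulAddHom Aᵐᵒᵖ X).flip.compl₂ opAddEquiv.toAddMonoidHom).comp h.toAddMonoidHom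
  have hg (n : N) (a : A) : g n a = op a • h n := rfl
  refine ⟨lift g (fun n r a => ?_) (fun n a a' => ?_), fun n => ?_⟩
  · rw [hg, hg, map_smul, hX, smul_smul, ← op_mul, smul_one_mul]
  · rw [hg, hg, op_mul, mul_smul]
  · rw [lift_tmul, hg, op_one, one_smul]

instance [Module.Projective Rᵐᵒᵖ N] : Module.Projective Aᵐᵒᵖ (InducedModule b N) := by
  refine Module.Projective.of_lifting_property'' fun f hf => ?_
  let restrict : Rᵐᵒᵖ →+* Aᵐᵒᵖ := (RingHom.smulOneHom : R →+* A).op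
  let _ : Module Rᵐᵒᵖ (InducedModule b N) := Module.compHom _ restrict
  let _ : Module Rᵐᵒᵖ (InducedModule b N →₀ Aᵐᵒᵖ) := Module.compHom _ restrict
  let f' : (InducedModule b N →₀ Aᵐᵒᵖ) →ₗ[Rᵐᵒᵖ] InducedModule b N :=
    { f with map_smul' := fun r x => f.map_smul (restrict r) x }
  let unit : N →ₗ[Rᵐᵒᵖ] InducedModule b N :=
    { (tmul b N).flip 1 with
      map_smul' := fun r n => by
        obtain ⟨r, rfl⟩ := op_surjective r
        change tmul b N (op r • n) 1 = op (r • (1 : A)) • tmul b N n 1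
        rw [tmul_op_smul, op_smul_tmul, one_mul] }
  obtain ⟨h, hh⟩ := Module.projective_lifting_property f' unit hf
  obtain ⟨φ, hφ⟩ := exists_linearMap_tmul_one (b := b) (fun _ _ => rfl) h
  exact ⟨φ, linearMap_ext fun n => by
    rw [LinearMap.comp_apply, hφ]
    exact DFunLike.congr_fun hh n⟩

end Module

open CategoryTheory in
theorem hasProjectiveDimensionLE {R : Type u} {A : Type v} {I : Type w} [Ring R] [Ring A]
    [Module R A] [IsScalarTower R A A] (b : Module.Basis I R A) (n : ℕ) (N : Type (max u v w))
    [AddCommGroup N] [Module Rᵐᵒᵖ N] (hN : HasProjectiveDimensionLE (ModuleCat.of Rᵐᵒᵖ N) n) :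
    HasProjectiveDimensionLE (ModuleCat.of Aᵐᵒᵖ (InducedModule b N)) n := by
  induction n generalizing N with
  | zero =>
    have := hasProjectiveDimensionLE_zero_iff_projective.1 hN
    exact hasProjectiveDimensionLE_zero_iff_projective.2 inferInstance
  | succ n ih =>
    have hsurj := Finsupp.linearCombination_id_surjective Rᵐᵒᵖ N
    have hker := (hasProjectiveDimensionLE_succ_iff_ker hsurj n).1 hN
    exact (hasProjectiveDimensionLE_succ_iff_of_exact
      (map_injective (Submodule.subtype_injective _)) (exact_map_ker_subtype _)
      (map_surjective hsurj) n).2 (ih _ hker)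

end InducedModule

namespace IsModuleTensor

variable {R A : Type u} [Ring R] [Ring A] {η β : R → A} {M : Type u} [AddCommGroup M]
  [Module Aᵐᵒᵖ M] {T : Type u} [AddCommGroup T] {τ : M →+ A →+ T}

theorem addMonoidHom_ext (hT : IsModuleTensor R A η β M T τ) {C : Type u} [AddCommGroup C]
    {f g : T →+ C} (h : ∀ m a, f (τ m a) = g (τ m a)) : f = g :=
  (hT.universal C (τ.compr₂ g) fun m r a => by simp [hT.balanced]).unique h fun _ _ => rfl

theorem exists_linearMap [Module Aᵐᵒᵖ T] (hT : IsModuleTensor R A η β M T τ)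
    (hτ : ∀ m a a', op a' • τ m a = τ m (a * a')) {X : Type u} [AddCommGroup X] [Module Aᵐᵒᵖ X]
    (g : M →+ A →+ X) (hbal : ∀ m r a, g (op (β r) • m) a = g m (η r * a))
    (hlin : ∀ m a a', op a' • g m a = g m (a * a')) :
    ∃ φ : T →ₗ[Aᵐᵒᵖ] X, ∀ m a, φ (τ m a) = g m a := by
  obtain ⟨φ, hφ, -⟩ := hT.universal X g hbal
  have hsmul (c : Aᵐᵒᵖ) : φ.comp (DistribSMul.toAddMonoidHom T c) =
      (DistribSMul.toAddMonoidHom X c).comp φ :=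
    hT.addMonoidHom_ext fun m a => by
      obtain ⟨a', rfl⟩ := op_surjective c
      simp [hτ, hφ, hlin]
  exact ⟨{ φ with map_smul' := fun c => DFunLike.congr_fun (hsmul c) }, hφ⟩

theorem exists_addEquiv (hT : IsModuleTensor R A η β M T τ) {T' : Type u} [AddCommGroup T']
    {τ' : M →+ A →+ T'} (hT' : IsModuleTensor R A η β M T' τ') :
    ∃ e : T ≃+ T', ∀ m a, e (τ m a) = τ' m a := by
  obtain ⟨φ, hφ, -⟩ := hT.universal T' τ' hT'.balanced
  obtain ⟨ψ, hψ, -⟩ := hT'.universal T τ hT.balanced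
  have hleft : ψ.comp φ = AddMonoidHom.id T := hT.addMonoidHom_ext fun m a => by simp [hφ, hψ]
  have hright : φ.comp ψ = AddMonoidHom.id T' := hT'.addMonoidHom_ext fun m a => by simp [hφ, hψ]
  exact ⟨φ.toAddEquiv ψ hleft hright, hφ⟩

end IsModuleTensor

theorem InducedModule.isModuleTensor {I : Type} {R A : Type u} [Ring R] [Ring A] [Module R A]
    (b : Module.Basis I R A) {M : Type u} [AddCommGroup M] [Module Aᵐᵒᵖ M] [Module Rᵐᵒᵖ M]
    {η β : R → A} (hη : ∀ r a, η r * a = r • a) (hβ : ∀ r (m : M), op (β r) • m = op r • m) :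
    IsModuleTensor R A η β M (InducedModule b M) (tmul b M) where
  balanced m r a := by rw [hη, hβ, tmul_op_smul]
  universal C _ g hg := by
    have hbal (m : M) (r : R) (a : A) : g (op r • m) a = g m (r • a) := by rw [← hη, ← hβ, hg]
    exact ⟨liftAddMonoidHom g, liftAddMonoidHom_tmul hbal, fun φ hφ =>
      addMonoidHom_ext fun m a => by rw [hφ, liftAddMonoidHom_tmul hbal]⟩

theorem IsModuleTensor.exists_addEquiv_finsupp {I : Type} {R A : Type u} [Ring R] [Ring A]
    [Module R A] (b : Module.Basis I R A) {M : Type u} [AddCommGroup M] [Module Aᵐᵒᵖ M]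
    {η : R → A} (hη : ∀ r a, η r * a = r • a) {β : R →+* A} {T : Type u} [AddCommGroup T]
    {τ : M →+ A →+ T} (hT : IsModuleTensor R A η β M T τ) :
    ∃ e : (I →₀ M) ≃+ T, ∀ i m, e (Finsupp.single i m) = τ m (b i) := by
  let _ : Module Rᵐᵒᵖ M := Module.compHom M β.op
  obtain ⟨e, he⟩ :=
    (InducedModule.isModuleTensor (M := M) b hη fun r m => rfl).exists_addEquiv hT
  refine ⟨(InducedModule.coeff b M).symm.trans e, fun i m => ?_⟩
  rw [AddEquiv.trans_apply, ← InducedModule.tmul_basis, he]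

theorem injective_of_map_single_eq_sub {N : Type*} [AddCommGroup N] (θ : N →+ N)
    {J : (ℕ →₀ N) →+ (ℕ →₀ N)}
    (hJ : ∀ i m, J (Finsupp.single i m) = Finsupp.single i (θ m) - Finsupp.single (i + 1) m) :
    Function.Injective J := by
  have hcoeff (i : ℕ) : (Finsupp.applyAddHom (i + 1)).comp J =
      θ.comp (Finsupp.applyAddHom (i + 1)) - Finsupp.applyAddHom i :=
    Finsupp.addHom_ext fun l m => by simp [hJ, Finsupp.single_apply, apply_ite θ]
  refine (injective_iff_map_eq_zero J).2 fun x hx => ?_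
  have hpred (i : ℕ) (hi : x (i + 1) = 0) : x i = 0 := by
    simpa [hx, hi] using DFunLike.congr_fun (hcoeff i) x
  by_contra hne
  have hsupp : x.support.Nonempty := Finsupp.support_nonempty_iff.2 hne
  refine Finsupp.mem_support_iff.1 (x.support.max'_mem hsupp) (hpred _ ?_)
  by_contra hi
  exact absurd (x.support.le_max' _ (Finsupp.mem_support_iff.2 hi)) (by simp)

namespace IsModuleTensor

variable {R A : Type u} [Ring R] [Ring A] {ι : R →+* A} {α : R →+* R} {δ : R → R} {t : A}
  {M : Type u} [AddCommGroup M] [Module Aᵐᵒᵖ M]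
  {T₁ : Type u} [AddCommGroup T₁] [Module Aᵐᵒᵖ T₁] {τ₁ : M →+ A →+ T₁}
  {T₂ : Type u} [AddCommGroup T₂] [Module Aᵐᵒᵖ T₂] {τ₂ : M →+ A →+ T₂}

theorem exists_linearMap_smul_sub_mul (rel : ∀ r, t * ι r = ι (α r) * t + ι (δ r))
    (hT₁ : IsModuleTensor R A ι (fun r => ι (α r)) M T₁ τ₁)
    (hτ₁ : ∀ m a a', op a' • τ₁ m a = τ₁ m (a * a')) (hT₂ : IsModuleTensor R A ι ι M T₂ τ₂)
    (hτ₂ : ∀ m a a', op a' • τ₂ m a = τ₂ m (a * a')) :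
    ∃ j : T₁ →ₗ[Aᵐᵒᵖ] T₂, ∀ m a, j (τ₁ m a) = τ₂ (op t • m) a - τ₂ m (t * a) := by
  let g : M →+ A →+ T₂ := τ₂.comp (DistribSMul.toAddMonoidHom M (op t)) -
    τ₂.compl₂ (AddMonoidHom.mulLeft t)
  have hg (m : M) (a : A) : g m a = τ₂ (op t • m) a - τ₂ m (t * a) := rfl
  refine hT₁.exists_linearMap hτ₁ g (fun m r a => ?_) fun m a a' => ?_
  · have hleft : op t • op (ι (α r)) • m = op (ι r) • op t • m - op (ι (δ r)) • m := by
      rw [smul_smul, smul_smul, ← op_mul, ← op_mul, rel, op_add, add_smul, add_sub_cancel_right]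
    have hright : t * (ι r * a) = ι (α r) * (t * a) + ι (δ r) * a := by
      rw [← mul_assoc, rel, add_mul, mul_assoc]
    rw [hg, hg, hleft, hright, map_sub, map_add, AddMonoidHom.sub_apply, hT₂.balanced,
      hT₂.balanced, hT₂.balanced, sub_sub, add_comm]
  · rw [hg, hg, smul_sub, hτ₂, hτ₂, mul_assoc]

theorem exists_linearMap_smul {η : R → A} (hT₂ : IsModuleTensor R A η η M T₂ τ₂)
    (hτ₂ : ∀ m a a', op a' • τ₂ m a = τ₂ m (a * a')) :
    ∃ p : T₂ →ₗ[Aᵐᵒᵖ] M, ∀ m a, p (τ₂ m a) = op a • m := by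
  let g : M →+ A →+ M := (smulAddHom Aᵐᵒᵖ M).flip.compl₂ opAddEquiv.toAddMonoidHom
  exact hT₂.exists_linearMap hτ₂ g (fun m r a => smul_smul (op a) (op (η r)) m)
    fun m a a' => smul_smul (op a') (op a) m

variable [Module R A] {j : T₁ →ₗ[Aᵐᵒᵖ] T₂}

theorem injective_of_smul_sub_mul (b : Module.Basis ℕ R A) (hb : ∀ i, b i = t ^ i)
    (hι : ∀ r a, ι r * a = r • a) {β₁ β₂ : R →+* A} (hT₁ : IsModuleTensor R A ι β₁ M T₁ τ₁)
    (hT₂ : IsModuleTensor R A ι β₂ M T₂ τ₂)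
    (hj : ∀ m a, j (τ₁ m a) = τ₂ (op t • m) a - τ₂ m (t * a)) : Function.Injective j := by
  obtain ⟨e₁, he₁⟩ := hT₁.exists_addEquiv_finsupp b hι
  obtain ⟨e₂, he₂⟩ := hT₂.exists_addEquiv_finsupp b hι
  let J : (ℕ →₀ M) →+ (ℕ →₀ M) :=
    e₂.symm.toAddMonoidHom.comp (j.toAddMonoidHom.comp e₁.toAddMonoidHom)
  have hJ : Function.Injective J :=
    injective_of_map_single_eq_sub (DistribSMul.toAddMonoidHom M (op t)) fun i m => by
      refine e₂.injective ?_
      simp [J, he₁, he₂, hj, hb, pow_succ']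
  have hJ' : ⇑J = e₂.symm ∘ j ∘ e₁ := rfl
  rwa [hJ', EmbeddingLike.comp_injective, EquivLike.injective_comp] at hJ

theorem mkQ_range_eq_mkQ_tmul_one (b : Module.Basis ℕ R A) (hb : ∀ i, b i = t ^ i)
    (hι : ∀ r a, ι r * a = r • a) (hT₂ : IsModuleTensor R A ι ι M T₂ τ₂)
    (hj : ∀ m a, j (τ₁ m a) = τ₂ (op t • m) a - τ₂ m (t * a)) {p : T₂ →ₗ[Aᵐᵒᵖ] M}
    (hp : ∀ m a, p (τ₂ m a) = op a • m) (x : T₂) :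
    (LinearMap.range j).mkQ x = (LinearMap.range j).mkQ (τ₂ (p x) 1) := by
  let π := (LinearMap.range j).mkQ
  let σ : T₂ →+ T₂ ⧸ LinearMap.range j := π.toAddMonoidHom.comp ((τ₂.flip 1).comp p.toAddMonoidHom)
  have hσ (m : M) (a : A) : σ (τ₂ m a) = π (τ₂ (op a • m) 1) := by simp [σ, hp]
  have hpow (i : ℕ) : ∀ m, π (τ₂ m (t ^ i)) = π (τ₂ (op (t ^ i) • m) 1) := by
    induction i with
    | zero => simp
    | succ i ih =>
      intro m
      have hzero : π (j (τ₁ m (t ^ i))) = 0 := by simp [π]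
      rw [hj, map_sub, sub_eq_zero, ih, smul_smul, ← op_mul, ← pow_succ'] at hzero
      exact hzero.symm
  have htmul (m : M) : π.toAddMonoidHom.comp (τ₂ m) = σ.comp (τ₂ m) :=
    addMonoidHom_ext_of_basis b fun i r => by
      rw [AddMonoidHom.comp_apply, AddMonoidHom.comp_apply, hσ, hb, ← hι, op_mul, mul_smul,
        ← hT₂.balanced]
      exact hpow i _
  have hπ : π.toAddMonoidHom = σ := hT₂.addMonoidHom_ext fun m => DFunLike.congr_fun (htmul m)
  exact DFunLike.congr_fun hπ x

theorem range_eq_ker_of_smul_sub_mul (b : Module.Basis ℕ R A) (hb : ∀ i, b i = t ^ i)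
    (hι : ∀ r a, ι r * a = r • a) {β₁ : R → A} (hT₁ : IsModuleTensor R A ι β₁ M T₁ τ₁)
    (hT₂ : IsModuleTensor R A ι ι M T₂ τ₂)
    (hj : ∀ m a, j (τ₁ m a) = τ₂ (op t • m) a - τ₂ m (t * a)) {p : T₂ →ₗ[Aᵐᵒᵖ] M}
    (hp : ∀ m a, p (τ₂ m a) = op a • m) : LinearMap.range j = LinearMap.ker p := by
  refine le_antisymm ?_ fun x hx => ?_
  · have hpj : p.toAddMonoidHom.comp j.toAddMonoidHom = 0 :=
      hT₁.addMonoidHom_ext fun m a => by simp [hj, hp, smul_smul]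
    rintro _ ⟨x, rfl⟩
    exact DFunLike.congr_fun hpj x
  · have hx' := mkQ_range_eq_mkQ_tmul_one b hb hι hT₂ hj hp x
    rw [LinearMap.mem_ker.1 hx, map_zero, AddMonoidHom.zero_apply, map_zero] at hx'
    exact (Submodule.Quotient.mk_eq_zero _).1 hx'

theorem exists_shortExact (rel : ∀ r, t * ι r = ι (α r) * t + ι (δ r))
    (b : Module.Basis ℕ R A) (hb : ∀ i, b i = t ^ i) (hι : ∀ r a, ι r * a = r • a)
    (hT₁ : IsModuleTensor R A ι (fun r => ι (α r)) M T₁ τ₁)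
    (hτ₁ : ∀ m a a', op a' • τ₁ m a = τ₁ m (a * a')) (hT₂ : IsModuleTensor R A ι ι M T₂ τ₂)
    (hτ₂ : ∀ m a a', op a' • τ₂ m a = τ₂ m (a * a')) :
    ∃ (j : T₁ →ₗ[Aᵐᵒᵖ] T₂) (p : T₂ →ₗ[Aᵐᵒᵖ] M),
      (∀ m a, j (τ₁ m a) = τ₂ (op t • m) a - τ₂ m (t * a)) ∧
      (∀ m a, p (τ₂ m a) = op a • m) ∧
      Function.Injective j ∧ Function.Surjective p ∧ LinearMap.range j = LinearMap.ker p := by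
  obtain ⟨j, hj⟩ := exists_linearMap_smul_sub_mul rel hT₁ hτ₁ hT₂ hτ₂
  obtain ⟨p, hp⟩ := exists_linearMap_smul hT₂ hτ₂
  have hp_surj : Function.Surjective p := fun m => ⟨τ₂ m 1, by rw [hp, op_one, one_smul]⟩
  exact ⟨j, p, hj, hp, injective_of_smul_sub_mul (β₁ := ι.comp α) b hb hι hT₁ hT₂ hj, hp_surj,
    range_eq_ker_of_smul_sub_mul b hb hι hT₁ hT₂ hj hp⟩

end IsModuleTensor

open CategoryTheory in
theorem exists_isModuleTensor_of_basis {I : Type} {R A : Type u} [Ring R] [Ring A] [Module R A]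
    (b : Module.Basis I R A) {η : R → A} (hη : ∀ r a, η r * a = r • a)
    (β : R →+* A) (M : Type u) [AddCommGroup M] [Module Aᵐᵒᵖ M] :
    ∃ (T : Type u) (_ : AddCommGroup T) (_ : Module Aᵐᵒᵖ T) (τ : M →+ A →+ T),
      IsModuleTensor R A η β M T τ ∧ (∀ m a a', op a' • τ m a = τ m (a * a')) ∧
      ∀ n : ℕ, rightGlobalDim R ≤ n → HasProjectiveDimensionLE (ModuleCat.of Aᵐᵒᵖ T) n := by
  let _ : Module Rᵐᵒᵖ M := Module.compHom M β.op
  have : IsScalarTower R A A :=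
    ⟨fun r a a' => by rw [smul_eq_mul, smul_eq_mul, ← hη, ← hη, mul_assoc]⟩
  exact ⟨InducedModule b M, inferInstance, inferInstance, InducedModule.tmul b M,
    InducedModule.isModuleTensor b hη fun _ _ => rfl,
    fun m a a' => InducedModule.op_smul_tmul m a' a,
    fun n hn => InducedModule.hasProjectiveDimensionLE b n M ((rightGlobalDim_le_iff n).1 hn M)⟩

theorem rightGlobalDim_le_add_one_of_basis_pow {R A : Type u} [Ring R] [Ring A] [Module R A]
    {ι : R →+* A} {α : R →+* R} {δ : R → R} {t : A} (rel : ∀ r, t * ι r = ι (α r) * t + ι (δ r))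
    (b : Module.Basis ℕ R A) (hb : ∀ i, b i = t ^ i) (hι : ∀ r a, ι r * a = r • a) :
    rightGlobalDim A ≤ rightGlobalDim R + 1 := by
  cases hR : rightGlobalDim R with
  | top => exact le_top
  | coe n =>
    refine (rightGlobalDim_le_iff (n + 1)).2 fun M _ _ => ?_
    obtain ⟨T₁, _, _, τ₁, hT₁, hτ₁, hpd₁⟩ := exists_isModuleTensor_of_basis b hι (ι.comp α) M
    obtain ⟨T₂, _, _, τ₂, hT₂, hτ₂, hpd₂⟩ := exists_isModuleTensor_of_basis b hι ι M
    obtain ⟨j, p, -, -, hj, hp, hjp⟩ := IsModuleTensor.exists_shortExact rel b hb hι hT₁ hτ₁ hT₂ hτ₂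
    exact hasProjectiveDimensionLE_succ_of_exact hj (LinearMap.exact_iff.2 hjp.symm) hp n
      (hpd₁ n hR.le) (hpd₂ n hR.le)

theorem ore_ses_and_rightGlobalDim_general
    {R A : Type u} [Ring R] [Ring A] (α : R →+* R) (δ : R → R) (ι : R →+* A) (t : A)
    (rel : ∀ r, t * ι r = ι (α r) * t + ι (δ r))
    (repr : ∀ a, ∃! c : ℕ →₀ R, a = c.sum fun i r => ι r * t ^ i) :
    (∀ (M : Type u) [AddCommGroup M] [Module Aᵐᵒᵖ M]
      (T₁ : Type u) [AddCommGroup T₁] [Module Aᵐᵒᵖ T₁] (τ₁ : M →+ A →+ T₁),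
      IsModuleTensor R A (fun r => ι r) (fun r => ι (α r)) M T₁ τ₁ →
      (∀ (m : M) (a b : A), MulOpposite.op b • τ₁ m a = τ₁ m (a * b)) →
      ∀ (T₂ : Type u) [AddCommGroup T₂] [Module Aᵐᵒᵖ T₂] (τ₂ : M →+ A →+ T₂),
      IsModuleTensor R A (fun r => ι r) (fun r => ι r) M T₂ τ₂ →
      (∀ (m : M) (a b : A), MulOpposite.op b • τ₂ m a = τ₂ m (a * b)) →
      ∃ (jmap : T₁ →ₗ[Aᵐᵒᵖ] T₂) (p : T₂ →ₗ[Aᵐᵒᵖ] M),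
        (∀ (m : M) (a : A),
          jmap (τ₁ m a) = τ₂ (MulOpposite.op t • m) a - τ₂ m (t * a)) ∧
        (∀ (m : M) (a : A), p (τ₂ m a) = MulOpposite.op a • m) ∧
        Function.Injective jmap ∧ Function.Surjective p ∧
        LinearMap.range jmap = LinearMap.ker p) ∧
    rightGlobalDim A ≤ rightGlobalDim R + 1 := by
  let _ : Module R A := Module.compHom A ι
  obtain ⟨b, hb⟩ := exists_basis_of_existsUnique_sum (v := fun i => t ^ i) repr
  have hι (r : R) (a : A) : ι r * a = r • a := rfl
  exact ⟨fun M _ _ T₁ _ _ τ₁ hT₁ hτ₁ T₂ _ _ τ₂ hT₂ hτ₂ =>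
    IsModuleTensor.exists_shortExact rel b hb hι hT₁ hτ₁ hT₂ hτ₂,
    rightGlobalDim_le_add_one_of_basis_pow rel b hb hι⟩

/-- Let `A = R[t; α, δ]` be an Ore extension with `α` an automorphism, and suppose
`R` has finite right global dimension.  Then for every right `A`-module `M` there is
a short exact sequence of right `A`-modules `0 → M_α ⊗_R A → M ⊗_R A → M → 0`
(the first map `m ⊗ a ↦ m·t ⊗ a - m ⊗ t·a`, the second `m ⊗ a ↦ m·a`), and
consequently `right-gldim A ≤ right-gldim R + 1`. -/
theorem ore_ses_and_rightGlobalDim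
    {k R A : Type u} [Field k] [Ring R] [Algebra k R] [Ring A] [Algebra k A]
    (α : R ≃ₐ[k] R) (δ : R →ₗ[k] R)
    (hδ : ∀ a b : R, δ (a * b) = δ a * b + α a * δ b)
    (ι : R →ₐ[k] A) (t : A) (hA : IsOreExtension k R α δ A ι t)
    (hfin : rightGlobalDim R ≠ ⊤) :
    (∀ (M : Type u) [AddCommGroup M] [Module Aᵐᵒᵖ M]
      (T₁ : Type u) [AddCommGroup T₁] [Module Aᵐᵒᵖ T₁] (τ₁ : M →+ A →+ T₁),
      IsModuleTensor R A (fun r => ι r) (fun r => ι (α r)) M T₁ τ₁ →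
      (∀ (m : M) (a b : A), MulOpposite.op b • τ₁ m a = τ₁ m (a * b)) →
      ∀ (T₂ : Type u) [AddCommGroup T₂] [Module Aᵐᵒᵖ T₂] (τ₂ : M →+ A →+ T₂),
      IsModuleTensor R A (fun r => ι r) (fun r => ι r) M T₂ τ₂ →
      (∀ (m : M) (a b : A), MulOpposite.op b • τ₂ m a = τ₂ m (a * b)) →
      ∃ (jmap : T₁ →ₗ[Aᵐᵒᵖ] T₂) (p : T₂ →ₗ[Aᵐᵒᵖ] M),
        (∀ (m : M) (a : A),
          jmap (τ₁ m a) = τ₂ (MulOpposite.op t • m) a - τ₂ m (t * a)) ∧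
        (∀ (m : M) (a : A), p (τ₂ m a) = MulOpposite.op a • m) ∧
        Function.Injective jmap ∧ Function.Surjective p ∧
        LinearMap.range jmap = LinearMap.ker p) ∧
    rightGlobalDim A ≤ rightGlobalDim R + 1 :=
  ore_ses_and_rightGlobalDim_general (α : R →+* R) δ (ι : R →+* A) t hA.rel hA.repr
end

section
/- Let R be an algebra of finite bidimension (projective dimension of R as an R-bimodule, i.e., as a module over R ⊗ R^op), α an automorphism of R, δ an α-derivation, and A = R[t; α, δ]. Then bidim(A) ≤ bidim(R) + 1. -/
universe u

open scoped TensorProduct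

/-! The multiplication map `A ⊗_R A → A` has kernel generated by `t ⊗ 1 - 1 ⊗ t`, and moving
elements of `R` across this generator costs a twist by `α`. This gives the exact sequence of
`A`-bimodules `0 → A_α ⊗_R A → A ⊗_R A → A → 0`. The first two terms are induced from `R` in two
steps, `Rᵉ → A ⊗ Rᵒᵖ → Aᵉ`, with `R` mapping to `A` through `ι ∘ α` or `ι` in the first step. The
powers of `t` form a basis of `A` over `R` on either side, so induction is exact and preserves
projectives. Hence both terms have projective dimension at most `bidim R`, and their cokernel `A`
has projective dimension at most `bidim R + 1`. -/

section ProjectiveDimension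

variable {T : Type u} [Ring T]

open CategoryTheory in
theorem pdLE_iff_hasProjectiveDimensionLT (n : ℕ) (M : Type u) [i : AddCommGroup M]
    [j : Module T M] :
    pdLE T n M i j ↔ HasProjectiveDimensionLT (ModuleCat.of T M) (n + 1) := by
  induction n generalizing M with
  | zero =>
    rw [zero_add, ← projective_iff_hasProjectiveDimensionLT_one, ← IsProjective.iff_projective]
    rfl
  | succ n ih =>
    have pd_ker {κ : Type u} {f : (κ →₀ T) →ₗ[T] M} (hf : Function.Surjective f) :
        HasProjectiveDimensionLT (ModuleCat.of T M) (n + 2) ↔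
          pdLE T n (LinearMap.ker f) inferInstance inferInstance :=
      ((LinearMap.shortExact_shortComplexKer hf).hasProjectiveDimensionLT_X₃_iff n
        ((IsProjective.iff_projective (κ →₀ T)).1 inferInstance)).trans (ih _).symm
    constructor
    · rintro ⟨κ, f, hf, hker⟩
      exact (pd_ker hf).2 hker
    · intro hM
      have hf := Finsupp.linearCombination_id_surjective T M
      exact ⟨M, _, hf, (pd_ker hf).1 hM⟩

open CategoryTheory in
theorem pdLE_succ_of_shortExact {n : ℕ} {X Y Z : Type u}
    [AddCommGroup X] [Module T X] [AddCommGroup Y] [Module T Y] [AddCommGroup Z] [Module T Z]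
    {f : X →ₗ[T] Y} {g : Y →ₗ[T] Z} (hf : Function.Injective f) (hg : Function.Surjective g)
    (hfg : Function.Exact f g) (hX : pdLE T n X inferInstance inferInstance)
    (hY : pdLE T n Y inferInstance inferInstance) :
    pdLE T (n + 1) Z inferInstance inferInstance := by
  rw [pdLE_iff_hasProjectiveDimensionLT] at hX hY ⊢
  exact (ModuleCat.shortComplex_shortExact
    (ModuleCat.shortComplexOfCompEqZero f g hfg.linearMap_comp_eq_zero) hfg hf hg
    ).hasProjectiveDimensionLT_X₃ (n + 1) hX (hasProjectiveDimensionLT_of_ge _ (n + 1) _ (by simp))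

variable {M : Type u} [i : AddCommGroup M] [j : Module T M]

theorem projDim_le_of_pdLE {n : ℕ} (h : pdLE T n M i j) : projDim T M i j ≤ n :=
  sInf_le ⟨n, rfl, h⟩

theorem exists_projDim_eq_of_ne_top (h : projDim T M i j ≠ ⊤) :
    ∃ n : ℕ, projDim T M i j = n ∧ pdLE T n M i j := by
  refine csInf_mem (s := {d : ℕ∞ | ∃ n : ℕ, d = n ∧ pdLE T n M i j})
    (Set.nonempty_iff_ne_empty.2 fun h_empty => h ?_)
  rw [projDim, h_empty, sInf_empty]

end ProjectiveDimension

section Induced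

variable {S T X : Type*} [Ring S] [Ring T] {φ : S →+* T} {b : X → T}
  {M M' N N' : Type*} [AddCommGroup M] [Module S M] [AddCommGroup M'] [Module S M']
  [AddCommGroup N] [Module T N] [AddCommGroup N'] [Module T N']

/-- The comparison map `⨁ₓ M → N`, `m ↦ ∑ₓ b x • j (m x)`, attached to a family `b` in `T` and a
semilinear map `j`. If `b` is a basis of the right `S`-module `T`, then the source
is `T ⊗_S M`, a tensor product that Mathlib does not provide over a noncommutative ring. -/
noncomputable def inducedSum (b : X → T) (j : M →ₛₗ[φ] N) : (X →₀ M) →+ N :=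
  Finsupp.liftAddHom fun x => (DistribSMul.toAddMonoidHom N (b x)).comp j.toAddMonoidHom

/-- The semilinear map `j : M → N` exhibits `N` as the `T`-module `T ⊗_S M` induced from `M`. This
is expressed relative to a basis `b` of the right `S`-module `T`: every element of `N` is
`∑ₓ b x • j (m x)` for a unique `m`. -/
def IsInduced (b : X → T) (j : M →ₛₗ[φ] N) : Prop :=
  Function.Bijective (inducedSum b j)

/-- The family `b` is a basis of `T` as a right `S`-module, where `S` acts through `φ`. -/
def IsRightBasis (φ : S →+* T) (b : X → T) : Prop :=
  IsInduced b φ.toSemilinearMap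

@[simp]
theorem inducedSum_single (j : M →ₛₗ[φ] N) (x : X) (m : M) :
    inducedSum b j (Finsupp.single x m) = b x • j m := by
  simp [inducedSum]

theorem inducedSum_comm {f : M →ₗ[S] M'} {g : N →ₗ[T] N'} {j : M →ₛₗ[φ] N} {j' : M' →ₛₗ[φ] N'}
    (h : ∀ m, g (j m) = j' (f m)) (c : X →₀ M) :
    g (inducedSum b j c) = inducedSum b j' (Finsupp.mapRange.linearMap f c) := by
  induction c using Finsupp.induction_linear with
  | zero => simp
  | add c d hc hd => simp only [map_add, hc, hd]
  | single x m => simp [h]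

theorem inducedSum_smul (j : M →ₛₗ[φ] N) (c : X →₀ S) (m : M) :
    inducedSum b φ.toSemilinearMap c • j m =
      inducedSum b j (Finsupp.mapRange.linearMap (LinearMap.toSpanSingleton S M m) c) := by
  simpa using inducedSum_comm (b := b) (f := LinearMap.toSpanSingleton S M m)
    (g := LinearMap.toSpanSingleton T N (j m)) (j := φ.toSemilinearMap) (by simp) c

theorem exists_semilinear_lift [Module.Projective S M] {f : N →ₗ[T] N'}
    (hf : Function.Surjective f) (g : M →ₛₗ[φ] N') : ∃ h : M →ₛₗ[φ] N, ∀ m, f (h m) = g m := by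
  let := Module.compHom N φ
  let := Module.compHom N' φ
  obtain ⟨h, hh⟩ := Module.projective_lifting_property (R := S)
    { f with map_smul' := fun s => f.map_smul (φ s) } { g with map_smul' := g.map_smulₛₗ } hf
  exact ⟨{ h with map_smul' := h.map_smul }, LinearMap.congr_fun hh⟩

namespace IsInduced

theorem hom_ext {j : M →ₛₗ[φ] N} (hj : IsInduced b j) {g g' : N →ₗ[T] N'}
    (h : ∀ m, g (j m) = g' (j m)) : g = g' := by
  ext y
  obtain ⟨c, rfl⟩ := hj.2 y
  induction c using Finsupp.induction_linear with
  | zero => simp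
  | add c d hc hd => simp only [map_add, hc, hd]
  | single x m => simp [h]

theorem exists_lift (hb : IsRightBasis φ b) {j : M →ₛₗ[φ] N} (hj : IsInduced b j)
    (g : M →ₛₗ[φ] N') : ∃ G : N →ₗ[T] N', ∀ m, G (j m) = g m := by
  let e := AddEquiv.ofBijective (inducedSum b j) hj
  let G : N →+ N' := (inducedSum b g).comp e.symm
  have G_sum (c : X →₀ M) : G (inducedSum b j c) = inducedSum b g c :=
    congrArg (inducedSum b g) (e.symm_apply_apply c)
  have G_smul (s : T) (m : M) : G (s • j m) = s • g m := by
    obtain ⟨c, rfl⟩ := hb.2 s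
    rw [inducedSum_smul, inducedSum_smul, G_sum]
  refine ⟨{ G with map_smul' := fun s y => ?_ }, fun m => by simpa using G_smul 1 m⟩
  change G (s • y) = s • G y
  obtain ⟨c, rfl⟩ := hj.2 y
  induction c using Finsupp.induction_linear with
  | zero => simp
  | add c d hc hd => simp only [map_add, smul_add, hc, hd]
  | single x m => rw [inducedSum_single, ← mul_smul, G_smul, G_smul, mul_smul]

theorem projective (hb : IsRightBasis φ b) {j : M →ₛₗ[φ] N} (hj : IsInduced b j)
    [Module.Projective S M] : Module.Projective T N := by
  refine .of_lifting_property'' fun f hf => ?_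
  obtain ⟨h, hh⟩ := exists_semilinear_lift hf j
  obtain ⟨H, hH⟩ := hj.exists_lift hb h
  exact ⟨H, hj.hom_ext fun m => by simp [hH, hh]⟩

theorem surjective {f : M →ₗ[S] M'} {g : N →ₗ[T] N'} {j : M →ₛₗ[φ] N} {j' : M' →ₛₗ[φ] N'}
    (hj' : IsInduced b j') (h : ∀ m, g (j m) = j' (f m)) (hf : Function.Surjective f) :
    Function.Surjective g := by
  intro y
  obtain ⟨c', rfl⟩ := hj'.2 y
  obtain ⟨c, rfl⟩ := Finsupp.mapRange_surjective f f.map_zero hf c'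
  exact ⟨_, inducedSum_comm h c⟩

theorem ker {f : M →ₗ[S] M'} {g : N →ₗ[T] N'} {j : M →ₛₗ[φ] N} {j' : M' →ₛₗ[φ] N'}
    (hj : IsInduced b j) (hj' : IsInduced b j') (h : ∀ m, g (j m) = j' (f m)) :
    IsInduced b (j.restrict (p := LinearMap.ker f) (q := LinearMap.ker g)
      (by simp +contextual [h])) := by
  set jker := j.restrict (p := LinearMap.ker f) (q := LinearMap.ker g) _
  have sum_ker (c : X →₀ LinearMap.ker f) : (inducedSum b jker c : N) =
      inducedSum b j (Finsupp.mapRange.linearMap (LinearMap.ker f).subtype c) :=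
    inducedSum_comm (f := (LinearMap.ker f).subtype) (g := (LinearMap.ker g).subtype)
      (fun _ => rfl) c
  constructor
  · intro c d hcd
    refine Finsupp.mapRange_injective _ rfl (LinearMap.ker f).injective_subtype (hj.1 ?_)
    exact (sum_ker c).symm.trans ((congrArg Subtype.val hcd).trans (sum_ker d))
  · rintro ⟨y, hy⟩
    obtain ⟨c, rfl⟩ := hj.2 y
    rw [LinearMap.mem_ker, inducedSum_comm h, map_eq_zero_iff _ hj'.1] at hy
    have hc : c ∈ LinearMap.range (Finsupp.mapRange.linearMap (LinearMap.ker f).subtype) := by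
      rwa [Finsupp.range_mapRange_linearMap _ (Submodule.ker_subtype _), Submodule.range_subtype,
        ← Finsupp.ker_mapRange]
    obtain ⟨d, rfl⟩ := hc
    exact ⟨d, Subtype.ext (sum_ker d)⟩

end IsInduced

theorem exists_inducedSum_eq_of_mem_span (hb : IsRightBasis φ b) (j : M →ₛₗ[φ] N) {G : Set M}
    {y : N} (hy : y ∈ Submodule.span T (j '' G)) :
    ∃ c ∈ Finsupp.submodule fun _ : X => Submodule.span S G, inducedSum b j c = y := by
  induction hy using Submodule.closure_induction with
  | zero => exact ⟨0, zero_mem _, map_zero _⟩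
  | add _ _ _ _ hy hz =>
    obtain ⟨c, hc, rfl⟩ := hy
    obtain ⟨d, hd, rfl⟩ := hz
    exact ⟨c + d, add_mem hc hd, map_add _ _ _⟩
  | smul_mem s _ hm =>
    obtain ⟨m, hm, rfl⟩ := hm
    obtain ⟨c, rfl⟩ := hb.2 s
    exact ⟨_, fun x => Submodule.smul_mem _ (c x) (Submodule.subset_span hm),
      (inducedSum_smul j c m).symm⟩

theorem IsInduced.exists_of_surjective (hb : IsRightBasis φ b) {j : M →ₛₗ[φ] N}
    (hj : IsInduced b j) {π : M →ₗ[S] M'} {ρ : N →ₗ[T] N'} (hπ : Function.Surjective π)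
    (hρ : Function.Surjective ρ) {G : Set M} (hGπ : LinearMap.ker π = Submodule.span S G)
    (hGρ : LinearMap.ker ρ = Submodule.span T (j '' G)) :
    ∃ j' : M' →ₛₗ[φ] N', IsInduced b j' ∧ ∀ m, j' (π m) = ρ (j m) := by
  have ker_le : LinearMap.ker π ≤ LinearMap.ker (ρ.comp j) := by
    rw [hGπ, Submodule.span_le]
    exact fun m hm => hGρ.ge (Submodule.subset_span ⟨m, hm, rfl⟩)
  let j' : M' →ₛₗ[φ] N' :=
    ((LinearMap.ker π).liftQ (ρ.comp j) ker_le).comp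
      (π.quotKerEquivOfSurjective hπ).symm.toLinearMap
  have j'_π (m : M) : j' (π m) = ρ (j m) := by
    have symm_π : (π.quotKerEquivOfSurjective hπ).symm (π m) = Submodule.Quotient.mk m :=
      (LinearEquiv.symm_apply_eq _).2 rfl
    exact congrArg ((LinearMap.ker π).liftQ (ρ.comp j) ker_le) symm_π
  have sum_comm (c : X →₀ M) := inducedSum_comm (b := b) (fun m => (j'_π m).symm) c
  refine ⟨j', ⟨?_, ?_⟩, j'_π⟩
  · rw [injective_iff_map_eq_zero]
    intro c' hc'
    obtain ⟨c, rfl⟩ := Finsupp.mapRange_surjective π π.map_zero hπ c'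
    have hc : inducedSum b j c ∈ LinearMap.ker ρ := (sum_comm c).trans hc'
    rw [hGρ] at hc
    obtain ⟨d, hd, hdc⟩ := exists_inducedSum_eq_of_mem_span hb j hc
    obtain rfl := hj.1 hdc
    rwa [← hGπ, ← Finsupp.ker_mapRange] at hd
  · intro y
    obtain ⟨y, rfl⟩ := hρ y
    obtain ⟨c, rfl⟩ := hj.2 y
    exact ⟨_, (sum_comm c).symm⟩

theorem IsRightBasis.isInduced_finsupp (hb : IsRightBasis φ b) (κ : Type*) :
    IsInduced b (Finsupp.mapRange.linearMap (α := κ) φ.toSemilinearMap) := by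
  let swap : (X →₀ κ →₀ S) ≃+ (κ →₀ X →₀ S) :=
    Finsupp.curryAddEquiv.symm.trans <|
      (Finsupp.domCongr (Equiv.prodComm X κ)).trans Finsupp.curryAddEquiv
  have sum_eq : inducedSum b (Finsupp.mapRange.linearMap (α := κ) φ.toSemilinearMap) =
      (Finsupp.mapRange.addMonoidHom (inducedSum b φ.toSemilinearMap)).comp
        swap.toAddMonoidHom := by
    ext x i s : 3
    simp [swap]
  rw [IsInduced, sum_eq]
  exact (Finsupp.mapRange.addEquiv (.ofBijective _ hb)).bijective.comp swap.bijective

theorem IsRightBasis.comp_ringEquiv {S' : Type*} [Ring S'] (hb : IsRightBasis φ b)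
    (e : S' ≃+* S) : IsRightBasis (φ.comp (e : S' →+* S)) b := by
  have sum_eq : inducedSum b (φ.comp (e : S' →+* S)).toSemilinearMap =
      (inducedSum b φ.toSemilinearMap).comp (Finsupp.mapRange.addMonoidHom (e : S' →+ S)) := by
    ext x s : 2
    simp
  rw [IsRightBasis, IsInduced, sum_eq]
  exact hb.comp (Finsupp.mapRange.addEquiv e.toAddEquiv).bijective

end Induced

theorem pdLE_of_isInduced {S T : Type u} {X : Type*} [Ring S] [Ring T] {φ : S →+* T} {b : X → T}
    (hb : IsRightBasis φ b) {n : ℕ} {M N : Type u} [AddCommGroup M] [Module S M]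
    [AddCommGroup N] [Module T N] {j : M →ₛₗ[φ] N} (hj : IsInduced b j)
    (hM : pdLE S n M inferInstance inferInstance) :
    pdLE T n N inferInstance inferInstance := by
  induction n generalizing M N with
  | zero =>
    have : Module.Projective S M := hM
    exact hj.projective hb
  | succ n ih =>
    obtain ⟨κ, f, hf, hker⟩ := hM
    have hfree := hb.isInduced_finsupp κ
    obtain ⟨g, hg⟩ := hfree.exists_lift hb (j.comp f)
    exact ⟨κ, g, hj.surjective hg hf, ih (hfree.ker hj hg) hker⟩

section TensorBasis

variable {k S T X : Type*} [CommRing k] [Ring S] [Algebra k S] [Ring T] [Algebra k T]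
  {φ : S →ₐ[k] T} {b : X → T}

/-- The linear equivalence `(X →₀ S) ≃ T` of a basis of `T` as a right `S`-module. -/
noncomputable def IsRightBasis.linearEquiv (hb : IsRightBasis φ.toRingHom b) :
    (X →₀ S) ≃ₗ[k] T :=
  (AddEquiv.ofBijective (inducedSum b φ.toRingHom.toSemilinearMap) hb).toLinearEquiv fun a c => by
    induction c using Finsupp.induction_linear with
    | zero => simp
    | add c d hc hd => simp only [smul_add, map_add, hc, hd]
    | single x s =>
      change inducedSum b φ.toRingHom.toSemilinearMap _ =
        a • inducedSum b φ.toRingHom.toSemilinearMap _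
      simp

theorem IsRightBasis.linearEquiv_single (hb : IsRightBasis φ.toRingHom b) (x : X) (s : S) :
    hb.linearEquiv (Finsupp.single x s) = b x * φ s :=
  inducedSum_single φ.toRingHom.toSemilinearMap x s

variable (U : Type*) [Ring U] [Algebra k U]

theorem IsRightBasis.one_tmul (hb : IsRightBasis φ.toRingHom b) :
    IsRightBasis (Algebra.TensorProduct.map (AlgHom.id k U) φ).toRingHom
      fun x => 1 ⊗ₜ[k] b x := by
  classical
  let e : (X →₀ U ⊗[k] S) ≃ₗ[k] U ⊗[k] T :=
    (TensorProduct.finsuppRight k k U S X).symm ≪≫ₗ hb.linearEquiv.lTensor U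
  have sum_eq : inducedSum (fun x => 1 ⊗ₜ[k] b x)
      (Algebra.TensorProduct.map (AlgHom.id k U) φ).toRingHom.toSemilinearMap =
        e.toAddEquiv.toAddMonoidHom := by
    ext x y
    induction y using TensorProduct.induction_on with
    | zero => simp
    | add y z hy hz => simp only [map_add, hy, hz]
    | tmul u s => simp [e, hb.linearEquiv_single]
  rw [IsRightBasis, IsInduced, sum_eq]
  exact e.bijective

theorem IsRightBasis.tmul_one (hb : IsRightBasis φ.toRingHom b) :
    IsRightBasis (Algebra.TensorProduct.map φ (AlgHom.id k U)).toRingHom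
      fun x => b x ⊗ₜ[k] 1 := by
  classical
  let e : (X →₀ S ⊗[k] U) ≃ₗ[k] T ⊗[k] U :=
    (TensorProduct.finsuppLeft k k S U X).symm ≪≫ₗ hb.linearEquiv.rTensor U
  have sum_eq : inducedSum (fun x => b x ⊗ₜ[k] 1)
      (Algebra.TensorProduct.map φ (AlgHom.id k U)).toRingHom.toSemilinearMap =
        e.toAddEquiv.toAddMonoidHom := by
    ext x y
    induction y using TensorProduct.induction_on with
    | zero => simp
    | add y z hy hz => simp only [map_add, hy, hz]
    | tmul s u => simp [e, hb.linearEquiv_single]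
  rw [IsRightBasis, IsInduced, sum_eq]
  exact e.bijective

end TensorBasis

section TwistedTensor

open MulOpposite

variable {k C A A' : Type*} [CommRing k] [Ring C] [Algebra k C] [Ring A] [Algebra k A]
  [Ring A'] [Algebra k A']

/-- The elements `β c ⊗ 1 - 1 ⊗ γ c` by which one divides to balance a tensor product over `C`. -/
def balancer (β : C →ₐ[k] A) (γ : C →ₐ[k] A') (c : C) : A ⊗[k] A'ᵐᵒᵖ :=
  β c ⊗ₜ 1 - 1 ⊗ₜ op (γ c)

/-- The bimodule `A ⊗_C A'`, where `C` acts on `A` from the right through `β` and on `A'` from the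
left through `γ`, as a left module over `A ⊗ A'ᵒᵖ`. For `C = R` and `β = ι ∘ α` this is the
bimodule `A_α ⊗_R A`. -/
abbrev TwistedTensor (β : C →ₐ[k] A) (γ : C →ₐ[k] A') : Type _ :=
  (A ⊗[k] A'ᵐᵒᵖ) ⧸ Submodule.span (A ⊗[k] A'ᵐᵒᵖ) (Set.range (balancer β γ))

theorem map_balancer (β : C →ₐ[k] A) (γ : C →ₐ[k] A') (c : C) :
    Algebra.TensorProduct.map (AlgHom.id k A) (AlgHom.op γ) (balancer β (AlgHom.id k C) c) =
      balancer β γ c := by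
  simp [balancer]

theorem ker_eq_span_balancer [Module (A ⊗[k] Cᵐᵒᵖ) A] {β : C →ₐ[k] A}
    {π : A ⊗[k] Cᵐᵒᵖ →ₗ[A ⊗[k] Cᵐᵒᵖ] A} (hπ : ∀ a c, π (a ⊗ₜ op c) = a * β c) :
    LinearMap.ker π = Submodule.span _ (Set.range (balancer β (AlgHom.id k C))) := by
  set L := Submodule.span (A ⊗[k] Cᵐᵒᵖ) (Set.range (balancer β (AlgHom.id k C)))
  refine le_antisymm (fun x hx => ?_) (Submodule.span_le.2 ?_)
  · have sub_mem (x : A ⊗[k] Cᵐᵒᵖ) : x - π x ⊗ₜ 1 ∈ L := by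
      induction x using TensorProduct.induction_on with
      | zero => simp
      | add x y hx hy =>
        rw [map_add, TensorProduct.add_tmul, add_sub_add_comm]
        exact add_mem hx hy
      | tmul a c =>
        obtain ⟨c, rfl⟩ := op_surjective c
        have h : a ⊗ₜ 1 * balancer β (AlgHom.id k C) c ∈ L :=
          Submodule.smul_mem _ _ (Submodule.subset_span ⟨c, rfl⟩)
        convert neg_mem h using 1
        simp [balancer, mul_sub, hπ]
    simpa [LinearMap.mem_ker.1 hx] using sub_mem x
  · rintro _ ⟨c, rfl⟩
    have π_tmul_one : π (β c ⊗ₜ 1) = β c := by simpa using hπ (β c) 1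
    simp [balancer, hπ, π_tmul_one]

namespace TwistedTensor

variable {Y : Type*}

/-- The map `⨁_y A → A ⊗_C A'`, `a ↦ ∑_y a_y ⊗ b y`. -/
noncomputable def expansion (β : C →ₐ[k] A) (γ : C →ₐ[k] A') (b : Y → A') :
    (Y →₀ A) →+ TwistedTensor β γ :=
  Finsupp.liftAddHom fun y =>
    (Submodule.mkQ _).toAddMonoidHom.comp
      ((TensorProduct.mk k A A'ᵐᵒᵖ).flip (op (b y))).toAddMonoidHom

@[simp]
theorem expansion_single (β : C →ₐ[k] A) (γ : C →ₐ[k] A') (b : Y → A') (y : Y) (a : A) :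
    expansion β γ b (Finsupp.single y a) = Submodule.Quotient.mk (a ⊗ₜ op (b y)) := by
  simp [expansion]

theorem exists_isInduced [Module (A ⊗[k] Cᵐᵒᵖ) A] {β : C →ₐ[k] A} {γ : C →ₐ[k] A'} {b : Y → A'}
    {π : A ⊗[k] Cᵐᵒᵖ →ₗ[A ⊗[k] Cᵐᵒᵖ] A} (hπ : ∀ a c, π (a ⊗ₜ op c) = a * β c)
    (hb : IsRightBasis (AlgHom.op γ).toRingHom fun y => op (b y)) :
    ∃ j : A →ₛₗ[(Algebra.TensorProduct.map (AlgHom.id k A) (AlgHom.op γ)).toRingHom]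
        TwistedTensor β γ,
      IsInduced (fun y => 1 ⊗ₜ op (b y)) j ∧
        inducedSum (fun y => 1 ⊗ₜ op (b y)) j = expansion β γ b := by
  have hb' := hb.one_tmul A
  have π_tmul_one (a : A) : π (a ⊗ₜ 1) = a := by simpa using hπ a 1
  obtain ⟨j, hj, j_π⟩ := IsInduced.exists_of_surjective hb' hb' (fun a => ⟨_, π_tmul_one a⟩)
    (Submodule.mkQ_surjective (Submodule.span _ (Set.range (balancer β γ))))
    (ker_eq_span_balancer hπ) <| by
      rw [Submodule.ker_mkQ, ← Set.range_comp]
      exact congrArg _ (congrArg _ (funext fun c => (map_balancer β γ c).symm))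
  have j_apply (a : A) : j a = Submodule.Quotient.mk (a ⊗ₜ 1) := by
    have map_tmul_one : Algebra.TensorProduct.map (AlgHom.id k A) (AlgHom.op γ) (a ⊗ₜ 1) =
      a ⊗ₜ 1 := by simp
    exact ((congrArg j (π_tmul_one a)).symm.trans (j_π _)).trans
      (congrArg Submodule.Quotient.mk map_tmul_one)
  refine ⟨j, hj, ?_⟩
  ext y a
  rw [AddMonoidHom.comp_apply, Finsupp.singleAddHom_apply, inducedSum_single]
  rw [j_apply, ← Submodule.Quotient.mk_smul, smul_eq_mul]
  simp

end TwistedTensor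

variable [Module (A ⊗[k] Aᵐᵒᵖ) A]

/-- The `A`-`C`-bimodule `A_β`: the bimodule `A` with `C` acting from the right through `β`. -/
abbrev twistedModule (β : C →ₐ[k] A) : Module (A ⊗[k] Cᵐᵒᵖ) A :=
  Module.compHom A (Algebra.TensorProduct.map (AlgHom.id k A) (AlgHom.op β)).toRingHom

theorem twistedModule_tmul_smul (hA : ∀ a b x : A, (a ⊗ₜ[k] op b) • x = a * x * b)
    (β : C →ₐ[k] A) (a x : A) (c : C) :
    letI := twistedModule β
    (a ⊗ₜ[k] op c) • x = a * x * β c :=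
  (congrArg (fun y : A ⊗[k] Aᵐᵒᵖ => y • x) (by simp)).trans (hA a (β c) x)

theorem TwistedTensor.bijective_expansion (hA : ∀ a b x : A, (a ⊗ₜ[k] op b) • x = a * x * b)
    {Y : Type*} {β : C →ₐ[k] A} {γ : C →ₐ[k] A'} {b : Y → A'}
    (hb : IsRightBasis (AlgHom.op γ).toRingHom fun y => op (b y)) :
    Function.Bijective (expansion β γ b) := by
  let := twistedModule (A := A) β
  obtain ⟨j, hj, j_eq⟩ := exists_isInduced (π := LinearMap.toSpanSingleton (A ⊗[k] Cᵐᵒᵖ) A 1)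
    (fun a c => by simpa using twistedModule_tmul_smul hA β a 1 c) hb
  rwa [IsInduced, j_eq] at hj

end TwistedTensor

theorem map_smul_of_tmul {k S S' T T' M N : Type*} [CommRing k] [Ring S] [Algebra k S]
    [Ring S'] [Algebra k S'] [Ring T] [Algebra k T] [Ring T'] [Algebra k T']
    [AddCommGroup M] [Module (S ⊗[k] T) M] [AddCommGroup N] [Module (S' ⊗[k] T') N]
    {φ : S ⊗[k] T →+* S' ⊗[k] T'} {f : M →+ N}
    (h : ∀ s t m, f ((s ⊗ₜ[k] t) • m) = φ (s ⊗ₜ t) • f m) (x : S ⊗[k] T) (m : M) :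
    f (x • m) = φ x • f m := by
  induction x using TensorProduct.induction_on with
  | zero => simp
  | add x y hx hy => simp only [map_add, add_smul, hx, hy]
  | tmul s t => exact h s t m

section TwistedTensorDimension

open MulOpposite

variable {k C A A' : Type u} [CommRing k] [Ring C] [Algebra k C]
  [Ring A] [Algebra k A] [Ring A'] [Algebra k A']
  [envC : Module (C ⊗[k] Cᵐᵒᵖ) C] [Module (A ⊗[k] Aᵐᵒᵖ) A] {n : ℕ} {X : Type*} {β : C →ₐ[k] A}
  {b : X → A}

theorem pdLE_twistedModule (hC : ∀ a b x : C, (a ⊗ₜ[k] op b) • x = a * x * b)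
    (hA : ∀ a b x : A, (a ⊗ₜ[k] op b) • x = a * x * b) (hb : IsRightBasis β.toRingHom b)
    (h : pdLE (C ⊗[k] Cᵐᵒᵖ) n C inferInstance envC) :
    pdLE (A ⊗[k] Cᵐᵒᵖ) n A inferInstance (twistedModule β) := by
  let := twistedModule (A := A) β
  have hβ (a x : A) (c : C) : (a ⊗ₜ[k] op c) • x = a * x * β c :=
    twistedModule_tmul_smul hA β a x c
  let j : C →ₛₗ[(Algebra.TensorProduct.map β (AlgHom.id k Cᵐᵒᵖ)).toRingHom] A :=
    { toFun := β
      map_add' := map_add β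
      map_smul' := map_smul_of_tmul (f := (β : C →+ A)) fun a c x => by
        obtain ⟨c, rfl⟩ := op_surjective c
        change β ((a ⊗ₜ[k] op c) • x) = (β a ⊗ₜ[k] op c) • β x
        rw [hC, hβ, map_mul, map_mul] }
  have sum_eq : inducedSum (fun x => b x ⊗ₜ 1) j = inducedSum b β.toRingHom.toSemilinearMap := by
    ext x c
    simpa [j] using hβ (b x) (β c) 1
  have hj : IsInduced (fun x => b x ⊗ₜ 1) j := by rwa [IsInduced, sum_eq]
  exact pdLE_of_isInduced (hb.tmul_one Cᵐᵒᵖ) hj h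

theorem pdLE_twistedTensor (hC : ∀ a b x : C, (a ⊗ₜ[k] op b) • x = a * x * b)
    (hA : ∀ a b x : A, (a ⊗ₜ[k] op b) • x = a * x * b) (hb : IsRightBasis β.toRingHom b)
    {Y : Type*} {γ : C →ₐ[k] A'} {b' : Y → A'}
    (hb' : IsRightBasis (AlgHom.op γ).toRingHom fun y => op (b' y))
    (h : pdLE (C ⊗[k] Cᵐᵒᵖ) n C inferInstance envC) :
    pdLE (A ⊗[k] A'ᵐᵒᵖ) n (TwistedTensor β γ) inferInstance inferInstance := by
  let := twistedModule (A := A) β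
  obtain ⟨j, hj, -⟩ :=
    TwistedTensor.exists_isInduced (π := LinearMap.toSpanSingleton (A ⊗[k] Cᵐᵒᵖ) A 1)
      (fun a c => by simpa using twistedModule_tmul_smul hA β a 1 c) hb'
  exact pdLE_of_isInduced (hb'.one_tmul A) hj (pdLE_twistedModule hC hA hb h)

end TwistedTensorDimension

section OreExtension

open MulOpposite Finsupp

theorem finsupp_eq_zero_of_succ {M : Type*} [AddCommMonoid M] {y : ℕ →₀ M}
    (hy : ∀ i, y (i + 1) = 0 → y i = 0) : y = 0 := by
  have eq_zero (i n : ℕ) : y (i + n) = 0 → y i = 0 := by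
    induction n with
    | zero => exact id
    | succ _ ih => exact fun h => ih (hy _ h)
  ext i
  refine eq_zero i (y.support.sup id + 1) (notMem_support_iff.1 fun h => ?_)
  have := Finset.le_sup (f := id) h
  grind

variable {k R A : Type*} [CommRing k] [Ring R] [Algebra k R] [Ring A] [Algebra k A]
  {α : R ≃ₐ[k] R} {δ : R →ₗ[k] R} {ι : R →ₐ[k] A} {t : A}

/-- The map `c ↦ ∑ᵢ ι (cᵢ) tⁱ` evaluating polynomials with coefficients on the left. -/
noncomputable def leftExpansion (ι : R →ₐ[k] A) (t : A) : (ℕ →₀ R) →+ A :=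
  liftAddHom fun i => (AddMonoidHom.mulRight (t ^ i)).comp (ι : R →+ A)

@[simp]
theorem leftExpansion_single (i : ℕ) (r : R) : leftExpansion ι t (single i r) = ι r * t ^ i := by
  simp [leftExpansion]

theorem bijective_leftExpansion
    (repr : ∀ a : A, ∃! c : ℕ →₀ R, a = c.sum fun i r => ι r * t ^ i) :
    Function.Bijective (leftExpansion ι t) :=
  (Function.bijective_iff_existsUnique _).2 fun a =>
    (existsUnique_congr fun _ => eq_comm).1 (repr a)

theorem isRightBasis_op_pow (hF : Function.Bijective (leftExpansion ι t)) :
    IsRightBasis (AlgHom.op ι).toRingHom fun i : ℕ => op (t ^ i) := by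
  have sum_eq : inducedSum (fun i : ℕ => op (t ^ i)) (AlgHom.op ι).toRingHom.toSemilinearMap =
      ((opAddEquiv : A ≃+ Aᵐᵒᵖ).toAddMonoidHom.comp (leftExpansion ι t)).comp
        (mapRange.addMonoidHom (opAddEquiv : R ≃+ Rᵐᵒᵖ).symm.toAddMonoidHom) := by
    ext i r
    simp
  rw [IsRightBasis, IsInduced, sum_eq]
  exact (opAddEquiv.bijective.comp hF).comp
    (mapRange.addEquiv (opAddEquiv : R ≃+ Rᵐᵒᵖ).symm).bijective

theorem mul_leftExpansion (rel : ∀ r, t * ι r = ι (α r) * t + ι (δ r)) (y : ℕ →₀ R) :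
    t * leftExpansion ι t y = leftExpansion ι t
      (mapDomain Nat.succ (mapRange α (map_zero α) y) + mapRange δ (map_zero δ) y) := by
  induction y using induction_linear with
  | zero => simp
  | add y z hy hz =>
    rw [map_add, mul_add, hy, hz, ← map_add, mapRange_add (map_add α), mapRange_add (map_add δ),
      mapDomain_add, add_add_add_comm]
  | single i r => simp [← mul_assoc, rel, add_mul, pow_succ']

theorem eq_zero_of_add_mul_eq_zero (rel : ∀ r, t * ι r = ι (α r) * t + ι (δ r))
    (hF : Function.Bijective (leftExpansion ι t)) {r : R} {a : A} (h : ι r + t * a = 0) :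
    r = 0 ∧ a = 0 := by
  obtain ⟨y, rfl⟩ := hF.2 a
  have coeff_eq : single 0 r +
      (mapDomain Nat.succ (mapRange α (map_zero α) y) + mapRange δ (map_zero δ) y) = 0 := by
    refine hF.1 ?_
    rw [map_add, ← mul_leftExpansion rel, map_zero, ← h]
    simp
  have hy : y = 0 := finsupp_eq_zero_of_succ fun i hi => by
    simpa [mapDomain_apply Nat.succ_injective, hi] using DFunLike.congr_fun coeff_eq (i + 1)
  simpa [hy] using coeff_eq

theorem inducedSum_pow_eq (c : ℕ →₀ R) :
    inducedSum (fun i : ℕ => t ^ i) ι.toRingHom.toSemilinearMap c = ι (c 0) +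
      t * inducedSum (fun i : ℕ => t ^ i) ι.toRingHom.toSemilinearMap
        (comapDomain Nat.succ c Nat.succ_injective.injOn) := by
  induction c using induction_linear with
  | zero => simp
  | add c d hc hd =>
    rw [map_add, hc, hd, comapDomain_add_of_injective Nat.succ_injective, map_add, mul_add,
      Finsupp.add_apply, map_add, add_add_add_comm]
  | single i r =>
    cases i with
    | zero =>
      have : comapDomain Nat.succ (single 0 r) Nat.succ_injective.injOn = 0 := by ext; simp
      simp [this]
    | succ i =>
      have : comapDomain Nat.succ (single (i + 1) r) Nat.succ_injective.injOn = single i r :=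
        comapDomain_single ..
      simp [this, pow_succ', mul_assoc]

theorem isRightBasis_pow (rel : ∀ r, t * ι r = ι (α r) * t + ι (δ r))
    (hF : Function.Bijective (leftExpansion ι t)) :
    IsRightBasis ι.toRingHom fun i : ℕ => t ^ i := by
  set E := inducedSum (fun i : ℕ => t ^ i) ι.toRingHom.toSemilinearMap
  constructor
  · rw [injective_iff_map_eq_zero]
    intro c hc
    ext n
    induction n generalizing c with
    | zero => exact (eq_zero_of_add_mul_eq_zero rel hF ((inducedSum_pow_eq c).symm.trans hc)).1
    | succ _ ih =>
      exact ih _ (eq_zero_of_add_mul_eq_zero rel hF ((inducedSum_pow_eq c).symm.trans hc)).2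
  · have mul_mem {a : A} (ha : a ∈ E.range) : a * t ∈ E.range := by
      obtain ⟨c, rfl⟩ := ha
      induction c using induction_linear with
      | zero => simp
      | add c d hc hd => simpa only [map_add, add_mul] using add_mem hc hd
      | single i r =>
        refine ⟨single (i + 1) (α.symm r) - single i (δ (α.symm r)), ?_⟩
        have := rel (α.symm r)
        simp [E, pow_succ, mul_assoc, this, mul_add]
    have mem (r : R) (i : ℕ) : ι r * t ^ i ∈ E.range := by
      induction i with
      | zero => exact ⟨single 0 r, by simp [E]⟩
      | succ i ih => simpa [pow_succ, ← mul_assoc] using mul_mem ih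
    intro a
    obtain ⟨y, rfl⟩ := hF.2 a
    induction y using induction_linear with
    | zero => exact ⟨0, by simp⟩
    | add y z hy hz => exact map_add (leftExpansion ι t) y z ▸ E.range.add_mem hy hz
    | single i r => exact leftExpansion_single (ι := ι) (t := t) i r ▸ mem r i

end OreExtension

section OreSequence

open MulOpposite Finsupp

variable {k R A : Type*} [CommRing k] [Ring R] [Algebra k R] [Ring A] [Algebra k A]
  {α : R ≃ₐ[k] R} {δ : R →ₗ[k] R} {ι : R →ₐ[k] A} {t : A}

theorem balancer_mem_of_mem_adjoin {s : Set A} {L : Submodule (A ⊗[k] Aᵐᵒᵖ) (A ⊗[k] Aᵐᵒᵖ)}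
    (hs : ∀ a ∈ s, balancer (AlgHom.id k A) (AlgHom.id k A) a ∈ L) {a : A}
    (ha : a ∈ Algebra.adjoin k s) : balancer (AlgHom.id k A) (AlgHom.id k A) a ∈ L := by
  induction ha using Algebra.adjoin_induction with
  | mem a ha => exact hs a ha
  | algebraMap c =>
    simp [balancer, Algebra.algebraMap_eq_smul_one, TensorProduct.smul_tmul]
  | add a b _ _ ha hb =>
    convert add_mem ha hb using 1
    simp [balancer, TensorProduct.add_tmul, TensorProduct.tmul_add, add_sub_add_comm]
  | mul a b _ _ ha hb =>
    convert add_mem (L.smul_mem (a ⊗ₜ 1) hb) (L.smul_mem (1 ⊗ₜ op b) ha) using 1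
    simp [balancer, mul_sub]

theorem adjoin_insert_range_eq_top (hF : Function.Surjective (leftExpansion ι t)) :
    Algebra.adjoin k (insert t (Set.range ι)) = ⊤ := by
  refine eq_top_iff.2 fun a _ => ?_
  obtain ⟨y, rfl⟩ := hF a
  induction y using induction_linear with
  | zero => simp
  | add y z hy hz => exact map_add (leftExpansion ι t) y z ▸ add_mem (hy trivial) (hz trivial)
  | single i r =>
    rw [leftExpansion_single]
    exact mul_mem (Algebra.subset_adjoin (by simp))
      (pow_mem (Algebra.subset_adjoin (Set.mem_insert ..)) i)

theorem balancer_mul_balancer (rel : ∀ r, t * ι r = ι (α r) * t + ι (δ r)) (r : R) :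
    balancer (ι.comp (α : R →ₐ[k] R)) ι r * balancer (AlgHom.id k A) (AlgHom.id k A) t =
      t ⊗ₜ 1 * balancer ι ι r - balancer ι ι (δ r) - 1 ⊗ₜ op t * balancer ι ι (α r) := by
  simp only [balancer, AlgHom.coe_comp, AlgEquiv.coe_toAlgHom, Function.comp_apply, AlgHom.coe_id,
    id_eq, mul_sub, sub_mul, Algebra.TensorProduct.tmul_mul_tmul, mul_one, one_mul, ← op_mul, rel,
    op_add, TensorProduct.tmul_add, TensorProduct.add_tmul]
  abel

namespace TwistedTensor

/-- The map `A_α ⊗_R A → A ⊗_R A`, `a ⊗ b ↦ a t ⊗ b - a ⊗ t b`. -/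
def differential (rel : ∀ r, t * ι r = ι (α r) * t + ι (δ r)) :
    TwistedTensor (ι.comp (α : R →ₐ[k] R)) ι →ₗ[A ⊗[k] Aᵐᵒᵖ] TwistedTensor ι ι :=
  Submodule.mapQ _ _
    (LinearMap.toSpanSingleton _ _ (balancer (AlgHom.id k A) (AlgHom.id k A) t)) <| by
      rw [Submodule.span_le]
      rintro _ ⟨r, rfl⟩
      have mem (r : R) :
          balancer ι ι r ∈ Submodule.span (A ⊗[k] Aᵐᵒᵖ) (Set.range (balancer ι ι)) :=
        Submodule.subset_span ⟨r, rfl⟩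
      change balancer (ι.comp (α : R →ₐ[k] R)) ι r * _ ∈ Submodule.span (A ⊗[k] Aᵐᵒᵖ) _
      rw [balancer_mul_balancer rel]
      exact sub_mem (sub_mem (Submodule.smul_mem _ _ (mem r)) (mem _))
        (Submodule.smul_mem _ _ (mem _))

theorem differential_mk (rel : ∀ r, t * ι r = ι (α r) * t + ι (δ r)) (x : A ⊗[k] Aᵐᵒᵖ) :
    differential rel (Submodule.Quotient.mk x) =
      Submodule.Quotient.mk (x * balancer (AlgHom.id k A) (AlgHom.id k A) t) :=
  rfl

theorem differential_expansion (rel : ∀ r, t * ι r = ι (α r) * t + ι (δ r)) (c : ℕ →₀ A) :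
    differential rel (expansion (ι.comp (α : R →ₐ[k] R)) ι (fun i : ℕ => t ^ i) c) =
      expansion ι ι (fun i : ℕ => t ^ i)
        (mapRange (· * t) (zero_mul t) c - mapDomain Nat.succ c) := by
  induction c using induction_linear with
  | zero => simp
  | add c d hc hd =>
    rw [map_add, map_add, hc, hd, mapRange_add fun _ _ => add_mul _ _ t, mapDomain_add,
      add_sub_add_comm, map_add]
  | single i a =>
    simp [differential_mk, balancer, mul_sub, pow_succ', -single_mul]

variable [Module (A ⊗[k] Aᵐᵒᵖ) A]

theorem injective_differential (rel : ∀ r, t * ι r = ι (α r) * t + ι (δ r))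
    (hA : ∀ a b x : A, (a ⊗ₜ[k] op b) • x = a * x * b)
    (hF : Function.Bijective (leftExpansion ι t)) :
    Function.Injective (differential rel) := by
  have hb := isRightBasis_op_pow hF
  rw [injective_iff_map_eq_zero]
  intro x hx
  obtain ⟨c, rfl⟩ := (bijective_expansion hA hb).2 x
  rw [differential_expansion] at hx
  have hc := (injective_iff_map_eq_zero _).1 (bijective_expansion hA hb).1 _ hx
  rw [finsupp_eq_zero_of_succ (y := c) fun i hi => ?_, map_zero]
  simpa [mapDomain_apply Nat.succ_injective, hi] using DFunLike.congr_fun hc (i + 1)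

/-- The multiplication map `A ⊗_R A → A`. -/
def multiplication (hA : ∀ a b x : A, (a ⊗ₜ[k] op b) • x = a * x * b) (ι : R →ₐ[k] A) :
    TwistedTensor ι ι →ₗ[A ⊗[k] Aᵐᵒᵖ] A :=
  Submodule.liftQ _ (LinearMap.toSpanSingleton _ A 1) <| by
    rw [ker_eq_span_balancer (β := AlgHom.id k A) (by simp [hA]), Submodule.span_le]
    rintro _ ⟨r, rfl⟩
    exact Submodule.subset_span ⟨ι r, rfl⟩

theorem multiplication_mk (hA : ∀ a b x : A, (a ⊗ₜ[k] op b) • x = a * x * b) (x : A ⊗[k] Aᵐᵒᵖ) :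
    multiplication hA ι (Submodule.Quotient.mk x) = x • 1 :=
  rfl

theorem multiplication_mk_eq_zero_iff (hA : ∀ a b x : A, (a ⊗ₜ[k] op b) • x = a * x * b)
    {x : A ⊗[k] Aᵐᵒᵖ} :
    multiplication hA ι (Submodule.Quotient.mk x) = 0 ↔
      x ∈ Submodule.span (A ⊗[k] Aᵐᵒᵖ)
        (Set.range (balancer (AlgHom.id k A) (AlgHom.id k A))) := by
  rw [← ker_eq_span_balancer (π := LinearMap.toSpanSingleton (A ⊗[k] Aᵐᵒᵖ) A 1) (by simp [hA])]
  rfl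

theorem surjective_multiplication (hA : ∀ a b x : A, (a ⊗ₜ[k] op b) • x = a * x * b) :
    Function.Surjective (multiplication hA ι) :=
  fun a => ⟨Submodule.Quotient.mk (a ⊗ₜ 1), by simpa [multiplication_mk] using hA a 1 1⟩

theorem exact_differential_multiplication (rel : ∀ r, t * ι r = ι (α r) * t + ι (δ r))
    (hA : ∀ a b x : A, (a ⊗ₜ[k] op b) • x = a * x * b)
    (hF : Function.Surjective (leftExpansion ι t)) :
    Function.Exact (differential rel) (multiplication hA ι) := by
  intro y
  obtain ⟨x, rfl⟩ := Submodule.Quotient.mk_surjective _ y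
  rw [multiplication_mk_eq_zero_iff]
  constructor
  · let L := (LinearMap.range (differential rel)).comap (Submodule.mkQ _)
    have balancer_mem (a : A) : balancer (AlgHom.id k A) (AlgHom.id k A) a ∈ L := by
      refine balancer_mem_of_mem_adjoin ?_ ((adjoin_insert_range_eq_top hF).ge trivial)
      rintro _ (rfl | ⟨r, rfl⟩)
      · exact ⟨Submodule.Quotient.mk 1, by simp [differential_mk]⟩
      · exact LinearMap.ker_le_comap _ ((Submodule.ker_mkQ _).ge (Submodule.subset_span ⟨r, rfl⟩))
    intro hx
    exact Submodule.span_le.2 (Set.range_subset_iff.2 balancer_mem) hx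
  · rintro ⟨z, hz⟩
    obtain ⟨z, rfl⟩ := Submodule.Quotient.mk_surjective _ z
    rw [← multiplication_mk_eq_zero_iff hA (ι := ι), ← hz, differential_mk,
      multiplication_mk_eq_zero_iff]
    exact Submodule.smul_mem _ z (Submodule.subset_span ⟨t, rfl⟩)

end TwistedTensor

end OreSequence

section Bidimension

open MulOpposite

variable {k R A : Type u} [CommRing k] [Ring R] [Algebra k R] [Ring A] [Algebra k A]
  [envR : Module (R ⊗[k] Rᵐᵒᵖ) R] [envA : Module (A ⊗[k] Aᵐᵒᵖ) A]
  {α : R ≃ₐ[k] R} {δ : R →ₗ[k] R} {ι : R →ₐ[k] A} {t : A}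

theorem pdLE_succ_of_bijective_leftExpansion
    (hR : ∀ a b x : R, (a ⊗ₜ[k] op b) • x = a * x * b)
    (hA : ∀ a b x : A, (a ⊗ₜ[k] op b) • x = a * x * b)
    (rel : ∀ r, t * ι r = ι (α r) * t + ι (δ r)) (hF : Function.Bijective (leftExpansion ι t))
    {n : ℕ} (h : pdLE (R ⊗[k] Rᵐᵒᵖ) n R inferInstance envR) :
    pdLE (A ⊗[k] Aᵐᵒᵖ) (n + 1) A inferInstance envA := by
  have hb := isRightBasis_pow rel hF
  have hb_op := isRightBasis_op_pow hF
  have hb_α : IsRightBasis (ι.comp (α : R →ₐ[k] R)).toRingHom fun i : ℕ => t ^ i :=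
    hb.comp_ringEquiv (α : R ≃+* R)
  exact pdLE_succ_of_shortExact (TwistedTensor.injective_differential rel hA hF)
    (TwistedTensor.surjective_multiplication hA)
    (TwistedTensor.exact_differential_multiplication rel hA hF.2)
    (pdLE_twistedTensor hR hA hb_α hb_op h) (pdLE_twistedTensor hR hA hb hb_op h)

theorem bidim_oreExtension_le_general
    (henvR : ∀ a b x : R, (a ⊗ₜ[k] op b) • x = a * x * b)
    (henvA : ∀ a b x : A, (a ⊗ₜ[k] op b) • x = a * x * b)
    (rel : ∀ r, t * ι r = ι (α r) * t + ι (δ r))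
    (repr : ∀ a : A, ∃! c : ℕ →₀ R, a = c.sum fun i r => ι r * t ^ i) :
    projDim (A ⊗[k] Aᵐᵒᵖ) A inferInstance envA ≤
      projDim (R ⊗[k] Rᵐᵒᵖ) R inferInstance envR + 1 := by
  by_cases hfin : projDim (R ⊗[k] Rᵐᵒᵖ) R inferInstance envR = ⊤
  · simp [hfin]
  · obtain ⟨n, hn, h⟩ := exists_projDim_eq_of_ne_top hfin
    rw [hn]
    exact projDim_le_of_pdLE
      (pdLE_succ_of_bijective_leftExpansion henvR henvA rel (bijective_leftExpansion repr) h)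

end Bidimension

/-- Let `R` be an algebra over a field `k` of finite bidimension (the projective
dimension of `R` as a module over its enveloping algebra `R ⊗ Rᵒᵖ`, the action being
`(a ⊗ bᵒᵖ) • x = a·x·b`), let `α` be an automorphism of `R`, `δ` an `α`-derivation,
and `A = R[t; α, δ]` the Ore extension.  Then `bidim A ≤ bidim R + 1`. -/
theorem bidim_oreExtension_le
    {k R A : Type u} [Field k] [Ring R] [Algebra k R] [Ring A] [Algebra k A]
    [envR : Module (R ⊗[k] Rᵐᵒᵖ) R]
    (henvR : ∀ (a b x : R), (a ⊗ₜ[k] MulOpposite.op b) • x = a * x * b)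
    [envA : Module (A ⊗[k] Aᵐᵒᵖ) A]
    (henvA : ∀ (a b x : A), (a ⊗ₜ[k] MulOpposite.op b) • x = a * x * b)
    (α : R ≃ₐ[k] R) (δ : R →ₗ[k] R)
    (hδ : ∀ a b : R, δ (a * b) = δ a * b + α a * δ b)
    (ι : R →ₐ[k] A) (t : A) (hA : IsOreExtension k R α δ A ι t)
    (hfin : projDim (R ⊗[k] Rᵐᵒᵖ) R inferInstance envR ≠ ⊤) :
    projDim (A ⊗[k] Aᵐᵒᵖ) A inferInstance envA ≤
      projDim (R ⊗[k] Rᵐᵒᵖ) R inferInstance envR + 1 :=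
  bidim_oreExtension_le_general henvR henvA hA.rel hA.repr
end
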